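/- arXiv:2201.03143 — 4 statements merged into one kernel-verified Lean document; each statement's English description precedes it below -/
import Mathlib

section
/- Let a, b > 0 be real numbers, let Ω = [0,a] × [0,b], and let k be a nonnegative integer. Then the minimum of ℓ_Ω(Λ) over all convex integral paths Λ with L̂(Λ) = k + 1 exists and equals min{am + bn : m, n ∈ ℤ≥0, (m+1)(n+1) ≥ k + 1}. -/
/-!
For the rectangle `[0,a] × [0,b]` the support function is `v ↦ a|v₁| + b|v₂|`, so the length of a
path is a weighted sum of its horizontal and vertical variations.

*Lower bound.* Let `m` and `n` be the largest coordinates of the vertices of a path. The path starts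
at first coordinate `0` and reaches `m`, and it ends at second coordinate `0` after reaching `n`, so
its length is at least `a m + b n`. Its region lies in `[0,m] × [0,n]` and therefore contains at most
`(m+1)(n+1)` lattice points (`exists_box_le_pathLength`). Convexity plays no part here.

*Attainment.* Let `(m,n)` minimise `a m + b n` subject to `(m+1)(n+1) ≥ k+1`. By minimality the excess
`r = (m+1)(n+1) - (k+1)` is at most `min m n`. Cutting the upper right corner of `[0,m] × [0,n]` along
the line through `(m-1,n)` and `(m,n-r)` removes exactly `r` lattice points, all in the last column
(`ncard_truncRect`). The boundary of the resulting polygon is a convex integral path that moves only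
right and down, so its length is exactly `a m + b n` (`exists_path`).
-/


open scoped BigOperators

noncomputable section

/-- The cross product (determinant) of two vectors in `ℝ²`. -/
def cross (u w : ℝ × ℝ) : ℝ := u.1 * w.2 - u.2 * w.1

/-- Given a finite sequence of lattice points `p 0, …, p N`, the associated closed cyclic
vertex sequence `(0,0), p 0, …, p N` in `ℝ²` (the closing edge going from `p N` back
to the origin). -/
def closedVerts {N : ℕ} (p : Fin (N + 1) → ℤ × ℤ) : Fin (N + 2) → ℝ × ℝ :=
  fun i => Fin.cases (motive := fun _ => ℝ × ℝ) ((0 : ℝ), (0 : ℝ))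
    (fun j => (((p j).1 : ℝ), ((p j).2 : ℝ))) i

/-- A convex integral path: a finite sequence `p 0, …, p N` of lattice points in the
nonnegative quadrant with `p 0 = (0, b)` and `p N = (a, 0)` for some nonnegative integers
`a, b`, such that the closed polygonal curve through `(0,0), p 0, …, p N, (0,0)` traverses
clockwise the boundary of the convex region `R(Λ) = convexHull {(0,0), p 0, …, p N}`:
every vertex lies weakly to the right of every directed edge (so the region bounded by the
path and the two axis segments is convex and the traversal is clockwise), the edges cover
all of the boundary of `R(Λ)`, and no vertex of the path is repeated. -/
structure ConvexIntegralPath where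
  N : ℕ
  p : Fin (N + 1) → ℤ × ℤ
  inj : Function.Injective p
  nonneg : ∀ i, 0 ≤ (p i).1 ∧ 0 ≤ (p i).2
  start_on_axis : (p 0).1 = 0
  end_on_axis : (p (Fin.last N)).2 = 0
  clockwise : ∀ i j : Fin (N + 2),
    cross (closedVerts p (i + 1) - closedVerts p i) (closedVerts p j - closedVerts p i) ≤ 0
  boundary : frontier (convexHull ℝ (Set.range (closedVerts p))) ⊆
    ⋃ i : Fin (N + 2), segment ℝ (closedVerts p i) (closedVerts p (i + 1))

namespace ConvexIntegralPath

/-- The convex region `R(Λ)` bounded by the path `Λ` and the two axis segments, i.e. the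
convex hull of `(0,0), p 0, …, p N`. -/
def region (Λ : ConvexIntegralPath) : Set (ℝ × ℝ) :=
  convexHull ℝ (Set.range (closedVerts Λ.p))

/-- `L̂(Λ)`: the number of lattice points in the region `R(Λ)`, including lattice points on
the boundary. -/
def latticePointCount (Λ : ConvexIntegralPath) : ℕ :=
  {q : ℤ × ℤ | (((q.1 : ℝ), (q.2 : ℝ)) : ℝ × ℝ) ∈ Λ.region}.ncard

end ConvexIntegralPath

/-- `Ω̂ = {μ ∈ ℝ² : (|μ₁|, |μ₂|) ∈ Ω}`. -/
def hatSet (Ω : Set (ℝ × ℝ)) : Set (ℝ × ℝ) := {μ | ((|μ.1|, |μ.2|) : ℝ × ℝ) ∈ Ω}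

/-- The support function `‖v‖_Ω* = sup {⟨v, w⟩ : w ∈ Ω̂}`. -/
def dualNorm (Ω : Set (ℝ × ℝ)) (v : ℝ × ℝ) : ℝ :=
  sSup {x : ℝ | ∃ w ∈ hatSet Ω, x = v.1 * w.1 + v.2 * w.2}

/-- `ℓ_Ω(Λ) = ∑_{i=1}^N ‖p i − p (i−1)‖_Ω*`, the length of the convex integral path `Λ`
measured in the norm `‖·‖_Ω*`. -/
def pathLength (Ω : Set (ℝ × ℝ)) (Λ : ConvexIntegralPath) : ℝ :=
  ∑ i : Fin Λ.N, dualNorm Ω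
    ((((Λ.p i.succ).1 : ℝ) - ((Λ.p i.castSucc).1 : ℝ),
      ((Λ.p i.succ).2 : ℝ) - ((Λ.p i.castSucc).2 : ℝ)))

/-! ### The length functional -/

/-- For a rectangle the support function is the weighted `ℓ¹` norm. -/
lemma dualNorm_rect {a b : ℝ} (ha : 0 < a) (hb : 0 < b) (v : ℝ × ℝ) :
    dualNorm (Set.Icc 0 a ×ˢ Set.Icc 0 b) v = a * |v.1| + b * |v.2| := by
  have key : ∀ c t : ℝ, 0 < c → ∃ w : ℝ, |w| = c ∧ t * w = c * |t| := by
    intro c t hc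
    rcases le_total 0 t with h | h
    · exact ⟨c, abs_of_pos hc, by rw [abs_of_nonneg h]; ring⟩
    · exact ⟨-c, by rw [abs_neg, abs_of_pos hc], by rw [abs_of_nonpos h]; ring⟩
  refine IsGreatest.csSup_eq ⟨?_, ?_⟩
  · obtain ⟨w₁, h₁, e₁⟩ := key a v.1 ha
    obtain ⟨w₂, h₂, e₂⟩ := key b v.2 hb
    refine ⟨(w₁, w₂), ?_, by simp only [e₁, e₂]⟩
    simp only [hatSet, Set.mem_ofPred_eq, Set.mem_prod, Set.mem_Icc, h₁, h₂]
    exact ⟨⟨ha.le, le_rfl⟩, hb.le, le_rfl⟩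
  · rintro x ⟨w, hw, rfl⟩
    obtain ⟨⟨-, h₁⟩, -, h₂⟩ := hw
    have key2 : ∀ s t c : ℝ, |t| ≤ c → s * t ≤ c * |s| := by
      intro s t c h
      calc s * t ≤ |s * t| := le_abs_self _
        _ = |t| * |s| := by rw [abs_mul, mul_comm]
        _ ≤ c * |s| := mul_le_mul_of_nonneg_right h (abs_nonneg _)
    exact add_le_add (key2 _ _ _ h₁) (key2 _ _ _ h₂)

lemma sub_first_le_variation {N : ℕ} (f : Fin (N + 1) → ℝ) (j : Fin (N + 1)) :
    f j - f 0 ≤ ∑ i : Fin N, |f i.succ - f i.castSucc| := by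
  induction N with
  | zero =>
    obtain rfl : j = 0 := Fin.eq_zero j
    simp
  | succ N ih =>
    rw [Fin.sum_univ_succ]
    have h0 : (0 : ℝ) ≤ ∑ i : Fin N, |f i.succ.succ - f i.succ.castSucc| :=
      Finset.sum_nonneg fun _ _ => abs_nonneg _
    have h1 := le_abs_self (f (Fin.succ 0) - f (Fin.castSucc 0))
    refine Fin.cases ?_ (fun j' => ?_) j
    · have := abs_nonneg (f (Fin.succ 0) - f (Fin.castSucc 0))
      linarith
    · have := ih (fun i => f i.succ) j'
      simp only [Fin.succ_castSucc, Fin.castSucc_zero] at this h1 ⊢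
      linarith

lemma sub_last_le_variation {N : ℕ} (f : Fin (N + 1) → ℝ) (j : Fin (N + 1)) :
    f j - f (Fin.last N) ≤ ∑ i : Fin N, |f i.succ - f i.castSucc| := by
  induction N with
  | zero =>
    obtain rfl : j = 0 := Fin.eq_zero j
    simp
  | succ N ih =>
    rw [Fin.sum_univ_castSucc]
    have h0 : (0 : ℝ) ≤ ∑ i : Fin N, |f i.castSucc.succ - f i.castSucc.castSucc| :=
      Finset.sum_nonneg fun _ _ => abs_nonneg _
    have h1 := neg_abs_le (f (Fin.last N).succ - f (Fin.last N).castSucc)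
    refine Fin.lastCases ?_ (fun j' => ?_) j
    · have := abs_nonneg (f (Fin.last N).succ - f (Fin.last N).castSucc)
      linarith
    · have := ih (fun i => f i.castSucc) j'
      simp only [← Fin.succ_castSucc, Fin.succ_last] at this h1 h0 ⊢
      linarith

lemma pathLength_rect {a b : ℝ} (ha : 0 < a) (hb : 0 < b) (Λ : ConvexIntegralPath) :
    pathLength (Set.Icc 0 a ×ˢ Set.Icc 0 b) Λ =
      a * ∑ i : Fin Λ.N, |((Λ.p i.succ).1 : ℝ) - ((Λ.p i.castSucc).1 : ℝ)| +
      b * ∑ i : Fin Λ.N, |((Λ.p i.succ).2 : ℝ) - ((Λ.p i.castSucc).2 : ℝ)| := by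
  simp only [pathLength, dualNorm_rect ha hb, Finset.sum_add_distrib, Finset.mul_sum]

/-- Every convex integral path is at least as long as some rectangle with at least as many lattice
points: take the bounding box of the path. -/
lemma exists_box_le_pathLength {a b : ℝ} (ha : 0 < a) (hb : 0 < b) (Λ : ConvexIntegralPath) :
    ∃ m n : ℕ, Λ.latticePointCount ≤ (m + 1) * (n + 1) ∧
      a * m + b * n ≤ pathLength (Set.Icc 0 a ×ˢ Set.Icc 0 b) Λ := by
  obtain ⟨i, hi⟩ := Finite.exists_max (fun i => (Λ.p i).1)
  obtain ⟨j, hj⟩ := Finite.exists_max (fun i => (Λ.p i).2)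
  obtain ⟨m, hm⟩ := Int.eq_ofNat_of_zero_le (Λ.nonneg i).1
  obtain ⟨n, hn⟩ := Int.eq_ofNat_of_zero_le (Λ.nonneg j).2
  refine ⟨m, n, ?_, ?_⟩
  · have hsub : Λ.region ⊆ Set.Icc (0 : ℝ) m ×ˢ Set.Icc (0 : ℝ) n := by
      refine convexHull_min ?_ ((convex_Icc _ _).prod (convex_Icc _ _))
      rintro _ ⟨l, rfl⟩
      refine Fin.cases ?_ (fun l => ?_) l
      · simp [closedVerts]
      · have h1 := hi l
        have h2 := hj l
        have h3 := Λ.nonneg l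
        simp only [hm, hn] at h1 h2
        simp only [closedVerts, Fin.cases_succ, Set.mem_prod, Set.mem_Icc]
        exact ⟨⟨by exact_mod_cast h3.1, by exact_mod_cast h1⟩, by exact_mod_cast h3.2,
          by exact_mod_cast h2⟩
    have hsub2 : {q : ℤ × ℤ | (((q.1 : ℝ), (q.2 : ℝ)) : ℝ × ℝ) ∈ Λ.region} ⊆
        ((Finset.Icc (0 : ℤ) m ×ˢ Finset.Icc (0 : ℤ) n : Finset (ℤ × ℤ)) : Set (ℤ × ℤ)) := by
      intro q hq
      have h := hsub hq
      simp only [Set.mem_prod, Set.mem_Icc] at h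
      simp only [Finset.coe_product, Finset.coe_Icc, Set.mem_prod, Set.mem_Icc]
      exact_mod_cast h
    have hc := Set.ncard_le_ncard hsub2 (Finset.finite_toSet _)
    rw [Set.ncard_coe_finset, Finset.card_product, Int.card_Icc, Int.card_Icc] at hc
    exact hc.trans (le_of_eq (by congr 1))
  · rw [pathLength_rect ha hb]
    have h1 := sub_first_le_variation (fun l => ((Λ.p l).1 : ℝ)) i
    have h2 := sub_last_le_variation (fun l => ((Λ.p l).2 : ℝ)) j
    simp only [hm, hn, Λ.start_on_axis, Λ.end_on_axis, Int.cast_natCast, Int.cast_zero, sub_zero]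
      at h1 h2
    exact add_le_add (mul_le_mul_of_nonneg_left h1 ha.le) (mul_le_mul_of_nonneg_left h2 hb.le)

/-! ### Truncated rectangles -/

/-- The rectangle `[0,m] × [0,n]` truncated at its upper right corner along the line through
`(m-1, n)` and `(m, n-r)`, which removes the top `r` lattice points of its last column. For
`m = 0` this is the segment `{0} × [0,n]` when `r = 0`. -/
def truncRect (m n r : ℕ) : Set (ℝ × ℝ) :=
  {q | 0 ≤ q.1 ∧ q.1 ≤ m ∧ 0 ≤ q.2 ∧ q.2 ≤ n ∧ r * (q.1 - m + 1) + q.2 ≤ n}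

lemma convex_truncRect (m n r : ℕ) : Convex ℝ (truncRect m n r) := by
  rintro ⟨x, y⟩ ⟨h1, h2, h3, h4, h5⟩ ⟨x', y'⟩ ⟨h1', h2', h3', h4', h5'⟩ s t hs ht hst
  obtain rfl : t = 1 - s := by linarith
  simp only [truncRect, Set.mem_ofPred_eq, Prod.smul_mk, Prod.mk_add_mk, smul_eq_mul] at *
  refine ⟨by positivity, ?_, by positivity, ?_, ?_⟩ <;> nlinarith

lemma isClosed_truncRect (m n r : ℕ) : IsClosed (truncRect m n r) := by
  simp only [truncRect, Set.ofPred_and]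
  refine IsClosed.inter ?_ (IsClosed.inter ?_ (IsClosed.inter ?_ (IsClosed.inter ?_ ?_))) <;>
    exact isClosed_le (by fun_prop) (by fun_prop)

lemma mem_segment_horizontal {x₀ x₁ x y : ℝ} (h₀ : x₀ ≤ x) (h₁ : x ≤ x₁) :
    ((x, y) : ℝ × ℝ) ∈ segment ℝ ((x₀, y) : ℝ × ℝ) (x₁, y) := by
  rw [← Prod.image_mk_segment_left, segment_eq_Icc (h₀.trans h₁)]
  exact ⟨x, ⟨h₀, h₁⟩, rfl⟩

lemma mem_segment_vertical {y₀ y₁ x y : ℝ} (h₀ : y₀ ≤ y) (h₁ : y ≤ y₁) :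
    ((x, y) : ℝ × ℝ) ∈ segment ℝ ((x, y₀) : ℝ × ℝ) (x, y₁) := by
  rw [← Prod.image_mk_segment_right, segment_eq_Icc (h₀.trans h₁)]
  exact ⟨y, ⟨h₀, h₁⟩, rfl⟩

/-- The truncating edge, parametrised by its first coordinate. -/
lemma mem_segment_slanted {m n r : ℕ} (hm : 1 ≤ m) {x : ℝ} (h₀ : (m : ℝ) - 1 ≤ x)
    (h₁ : x ≤ m) : ((x, n - r * (x - m + 1)) : ℝ × ℝ) ∈
      segment ℝ ((((m - 1 : ℕ) : ℝ), (n : ℝ)) : ℝ × ℝ) ((m : ℝ), (n : ℝ) - r) := by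
  refine ⟨m - x, x - m + 1, by linarith, by linarith, by ring, ?_⟩
  push_cast [hm]
  ext <;> simp <;> ring

lemma truncRect_subset {m n r : ℕ} (hrn : r ≤ n) {H : Set (ℝ × ℝ)}
    (hH : Convex ℝ H) (h₀ : ((0 : ℝ), (0 : ℝ)) ∈ H) (h₁ : ((0 : ℝ), (n : ℝ)) ∈ H)
    (h₂ : (((m - 1 : ℕ) : ℝ), (n : ℝ)) ∈ H) (h₃ : ((m : ℝ), (n : ℝ) - r) ∈ H)
    (h₄ : ((m : ℝ), (0 : ℝ)) ∈ H) : truncRect m n r ⊆ H := by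
  rintro ⟨x, y⟩ ⟨hx, hxm, hy, hyn, hs⟩
  simp only at hx hxm hy hyn hs
  have hr : (r : ℝ) ≤ n := by exact_mod_cast hrn
  have hbot : (x, (0 : ℝ)) ∈ H := hH.segment_subset h₀ h₄ (mem_segment_horizontal hx hxm)
  -- Convexity along the vertical line through `x`: it remains to reach the top boundary.
  suffices ∃ t, y ≤ t ∧ (x, t) ∈ H by
    obtain ⟨t, hyt, ht⟩ := this
    exact hH.segment_subset hbot ht (mem_segment_vertical hy hyt)
  rcases le_total x ((m - 1 : ℕ) : ℝ) with h | h
  · exact ⟨n, hyn, hH.segment_subset h₁ h₂ (mem_segment_horizontal hx h)⟩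
  · rcases Nat.eq_zero_or_pos m with rfl | hm
    · obtain rfl : x = 0 := le_antisymm (by simpa using hxm) hx
      exact ⟨n, hyn, h₁⟩
    · push_cast [hm] at h
      exact ⟨n - r * (x - m + 1), by linarith,
        hH.segment_subset h₂ h₃ (mem_segment_slanted hm h hxm)⟩

lemma frontier_truncRect_subset {m n r : ℕ} {U : Set (ℝ × ℝ)}
    (h₀ : segment ℝ ((0 : ℝ), (0 : ℝ)) ((0 : ℝ), (n : ℝ)) ⊆ U)
    (h₁ : segment ℝ ((0 : ℝ), (n : ℝ)) (((m - 1 : ℕ) : ℝ), (n : ℝ)) ⊆ U)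
    (h₂ : segment ℝ (((m - 1 : ℕ) : ℝ), (n : ℝ)) ((m : ℝ), (n : ℝ) - r) ⊆ U)
    (h₃ : segment ℝ ((m : ℝ), (n : ℝ) - r) ((m : ℝ), (0 : ℝ)) ⊆ U)
    (h₄ : segment ℝ ((m : ℝ), (0 : ℝ)) ((0 : ℝ), (0 : ℝ)) ⊆ U) :
    frontier (truncRect m n r) ⊆ U := by
  rintro ⟨x, y⟩ hq
  have hP := (isClosed_truncRect m n r).frontier_subset hq
  have hnot : ¬ (0 < x ∧ x < m ∧ 0 < y ∧ y < n ∧ r * (x - m + 1) + y < n) := by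
    intro h
    refine hq.2 (mem_interior.2 ⟨{q : ℝ × ℝ | 0 < q.1 ∧ q.1 < m ∧ 0 < q.2 ∧ q.2 < n ∧
      r * (q.1 - m + 1) + q.2 < n}, ?_, ?_, h⟩)
    · rintro q ⟨a1, a2, a3, a4, a5⟩
      exact ⟨a1.le, a2.le, a3.le, a4.le, a5.le⟩
    · simp only [Set.ofPred_and]
      refine IsOpen.inter ?_ (IsOpen.inter ?_ (IsOpen.inter ?_ (IsOpen.inter ?_ ?_))) <;>
        exact isOpen_lt (by fun_prop) (by fun_prop)
  obtain ⟨hx, hxm, hy, hyn, hs⟩ := hP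
  simp only at hx hxm hy hyn hs
  rcases hx.eq_or_lt with rfl | hx0
  · exact h₀ (mem_segment_vertical hy hyn)
  have hm : 1 ≤ m := by
    have : (0 : ℝ) < m := hx0.trans_le hxm
    exact_mod_cast this
  rcases hy.eq_or_lt with rfl | hy0
  · exact h₄ ((segment_symm ℝ _ _).subset (mem_segment_horizontal hx hxm))
  rcases hxm.eq_or_lt with rfl | hxm'
  · exact h₃ ((segment_symm ℝ _ _).subset (mem_segment_vertical hy (by linarith)))
  have hslant : r * (x - m + 1) + y = n → (m : ℝ) - 1 ≤ x → (x, y) ∈ U := by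
    intro h h'
    obtain rfl : y = n - r * (x - m + 1) := by linarith
    exact h₂ (mem_segment_slanted hm h' hxm)
  have htop : y = n → x ≤ (m : ℝ) - 1 → (x, y) ∈ U := by
    rintro rfl h'
    exact h₁ (mem_segment_horizontal hx (by push_cast [hm]; exact h'))
  have hr0 : (0 : ℝ) ≤ r := by positivity
  rcases le_total x ((m : ℝ) - 1) with h | h
  · refine htop ?_ h
    by_contra hne
    have hlt := lt_of_le_of_ne hyn hne
    -- Left of the corner the slanted inequality is weaker than `y ≤ n`.
    exact hnot ⟨hx0, hxm', hy0, hlt, by nlinarith⟩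
  · refine hslant ?_ h
    by_contra hne
    have hlt := lt_of_le_of_ne hs hne
    exact hnot ⟨hx0, hxm', hy0, by nlinarith, hlt⟩

lemma ncard_truncRect {m n r : ℕ} (hrn : r ≤ n) :
    {q : ℤ × ℤ | (((q.1 : ℝ), (q.2 : ℝ)) : ℝ × ℝ) ∈ truncRect m n r}.ncard =
      (m + 1) * (n + 1) - r := by
  have hset : {q : ℤ × ℤ | (((q.1 : ℝ), (q.2 : ℝ)) : ℝ × ℝ) ∈ truncRect m n r} =
      (((Finset.Icc (0 : ℤ) m ×ˢ Finset.Icc (0 : ℤ) n) \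
        ({(m : ℤ)} ×ˢ Finset.Icc ((n : ℤ) - r + 1) n) : Finset (ℤ × ℤ)) : Set (ℤ × ℤ)) := by
    ext ⟨x, y⟩
    simp only [truncRect, Set.mem_ofPred_eq, Finset.coe_sdiff, Finset.coe_product, Finset.coe_Icc,
      Finset.coe_singleton, Set.mem_sdiff, Set.mem_prod, Set.mem_Icc, Set.mem_singleton_iff]
    norm_cast
    have hr0 : (0 : ℤ) ≤ r := by positivity
    constructor
    · rintro ⟨h1, h2, h3, h4, h5⟩
      refine ⟨⟨⟨h1, h2⟩, h3, h4⟩, ?_⟩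
      rintro ⟨rfl, h6, -⟩
      have : (r : ℤ) * (((m : ℤ) - m) + 1) = r := by ring
      omega
    · rintro ⟨⟨⟨h1, h2⟩, h3, h4⟩, h5⟩
      refine ⟨h1, h2, h3, h4, ?_⟩
      rcases h2.eq_or_lt with rfl | hlt
      · have : y < (n : ℤ) - r + 1 := by
          by_contra hc
          exact h5 ⟨rfl, by omega, h4⟩
        linarith
      · have : x - m + 1 ≤ 0 := by linarith
        nlinarith
  have hsub : {(m : ℤ)} ×ˢ Finset.Icc ((n : ℤ) - r + 1) n ⊆
      Finset.Icc (0 : ℤ) m ×ˢ Finset.Icc (0 : ℤ) n := by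
    intro q
    simp only [Finset.mem_product, Finset.mem_singleton, Finset.mem_Icc]
    omega
  rw [hset, Set.ncard_coe_finset, Finset.card_sdiff_of_subset hsub]
  simp only [Finset.card_product, Int.card_Icc, Finset.card_singleton, one_mul]
  congr 1
  omega

/-! ### Realising truncated rectangles by convex integral paths -/

lemma sum_increments {N : ℕ} (f : Fin (N + 1) → ℝ) :
    ∑ i : Fin N, (f i.succ - f i.castSucc) = f (Fin.last N) - f 0 := by
  induction N with
  | zero => simp
  | succ N ih =>
    rw [Fin.sum_univ_succ]
    have := ih (fun i => f i.succ)
    simp only [Fin.succ_castSucc, Fin.castSucc_zero, Fin.succ_last] at this ⊢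
    rw [this]
    ring

lemma closedVerts_eq_vecCons {N : ℕ} (p : Fin (N + 1) → ℤ × ℤ) :
    closedVerts p = Matrix.vecCons ((0 : ℝ), (0 : ℝ)) (fun j => (((p j).1 : ℝ), ((p j).2 : ℝ))) :=
  funext fun i => Fin.cases rfl (fun _ => rfl) i

/-- The points `A`, `B` are consecutive vertices of the closed polygon of `p`, or `A = B` is one
vertex of it. -/
def IsSide {N : ℕ} (p : Fin (N + 1) → ℤ × ℤ) (A B : ℝ × ℝ) : Prop :=
  ∃ i, closedVerts p i = A ∧ (B = A ∨ closedVerts p (i + 1) = B)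

lemma IsSide.segment_subset {N : ℕ} {p : Fin (N + 1) → ℤ × ℤ} {A B : ℝ × ℝ} (h : IsSide p A B) :
    segment ℝ A B ⊆
      ⋃ i : Fin (N + 2), segment ℝ (closedVerts p i) (closedVerts p (i + 1)) := by
  obtain ⟨i, rfl, rfl | rfl⟩ := h
  · rw [segment_same, Set.singleton_subset_iff]
    exact Set.mem_iUnion.2 ⟨i, left_mem_segment ℝ _ _⟩
  · exact Set.subset_iUnion (fun i => segment ℝ (closedVerts p i) (closedVerts p (i + 1))) i

/-- A clockwise vertex list from `(0,n)` to `(m,0)` moving right and down inside `truncRect m n r`,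
with all five sides of that polygon (some of which may degenerate to points) among its edges, is a
convex integral path with region `truncRect m n r`. -/
lemma exists_path_of_vertices {m n r : ℕ} (hrm : r ≤ m) (hrn : r ≤ n)
    {N : ℕ} (p : Fin (N + 1) → ℤ × ℤ) (inj : Function.Injective p)
    (hfirst : p 0 = (0, (n : ℤ))) (hlast : p (Fin.last N) = ((m : ℤ), 0))
    (hright : ∀ i : Fin N, (p i.castSucc).1 ≤ (p i.succ).1)
    (hdown : ∀ i : Fin N, (p i.succ).2 ≤ (p i.castSucc).2)
    (clockwise : ∀ i j : Fin (N + 2),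
      cross (closedVerts p (i + 1) - closedVerts p i) (closedVerts p j - closedVerts p i) ≤ 0)
    (hmem : ∀ i, (((p i).1 : ℝ), ((p i).2 : ℝ)) ∈ truncRect m n r)
    (h₀ : IsSide p ((0 : ℝ), (0 : ℝ)) ((0 : ℝ), (n : ℝ)))
    (h₁ : IsSide p ((0 : ℝ), (n : ℝ)) (((m - 1 : ℕ) : ℝ), (n : ℝ)))
    (h₂ : IsSide p (((m - 1 : ℕ) : ℝ), (n : ℝ)) ((m : ℝ), (n : ℝ) - r))
    (h₃ : IsSide p ((m : ℝ), (n : ℝ) - r) ((m : ℝ), (0 : ℝ)))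
    (h₄ : IsSide p ((m : ℝ), (0 : ℝ)) ((0 : ℝ), (0 : ℝ))) :
    ∃ Λ : ConvexIntegralPath, Λ.latticePointCount = (m + 1) * (n + 1) - r ∧
      ∀ a b : ℝ, 0 < a → 0 < b →
        pathLength (Set.Icc 0 a ×ˢ Set.Icc 0 b) Λ = a * m + b * n := by
  have hU : (⋃ i : Fin (N + 2), segment ℝ (closedVerts p i) (closedVerts p (i + 1))) ⊆
      convexHull ℝ (Set.range (closedVerts p)) :=
    Set.iUnion_subset fun i => segment_subset_convexHull ⟨i, rfl⟩ ⟨i + 1, rfl⟩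
  have hvert : ∀ {A B : ℝ × ℝ}, IsSide p A B → A ∈ convexHull ℝ (Set.range (closedVerts p)) :=
    fun h => hU (h.segment_subset (left_mem_segment ℝ _ _))
  have hhull : convexHull ℝ (Set.range (closedVerts p)) = truncRect m n r := by
    apply Set.Subset.antisymm
    · refine convexHull_min ?_ (convex_truncRect m n r)
      rintro _ ⟨l, rfl⟩
      refine Fin.cases ?_ (fun l => ?_) l
      · have hrm' : (r : ℝ) ≤ m := by exact_mod_cast hrm
        have hrn' : (r : ℝ) ≤ n := by exact_mod_cast hrn
        have hr0 : (0 : ℝ) ≤ r := by positivity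
        have hm0 : (0 : ℝ) ≤ m := by positivity
        refine ⟨le_rfl, hm0, le_rfl, hr0.trans hrn', ?_⟩
        simp only [closedVerts, Fin.cases_zero]
        nlinarith [mul_nonneg hr0 hm0]
      · exact hmem l
    · exact truncRect_subset hrn (convex_convexHull ℝ _)
        (hvert h₀) (hvert h₁) (hvert h₂) (hvert h₃) (hvert h₄)
  refine ⟨⟨N, p, inj, fun i => ?_, by rw [hfirst], by rw [hlast], clockwise, ?_⟩, ?_, ?_⟩
  · obtain ⟨h1, -, h2, -⟩ := hmem i
    simp only at h1 h2
    exact ⟨by exact_mod_cast h1, by exact_mod_cast h2⟩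
  · rw [hhull]
    exact frontier_truncRect_subset h₀.segment_subset h₁.segment_subset h₂.segment_subset
      h₃.segment_subset h₄.segment_subset
  · simp only [ConvexIntegralPath.latticePointCount, ConvexIntegralPath.region, hhull]
    exact ncard_truncRect hrn
  · intro a b ha hb
    rw [pathLength_rect ha hb]
    -- The path is monotone in both coordinates, so its variations telescope.
    have hx : ∀ i : Fin N, |((p i.succ).1 : ℝ) - (p i.castSucc).1| =
        ((p i.succ).1 : ℝ) - (p i.castSucc).1 := fun i =>
      abs_of_nonneg (sub_nonneg.2 (by exact_mod_cast hright i))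
    have hy : ∀ i : Fin N, |((p i.succ).2 : ℝ) - (p i.castSucc).2| =
        -(((p i.succ).2 : ℝ) - (p i.castSucc).2) := fun i =>
      abs_of_nonpos (sub_nonpos.2 (by exact_mod_cast hdown i))
    have ex := sum_increments (fun i => ((p i).1 : ℝ))
    have ey := sum_increments (fun i => ((p i).2 : ℝ))
    simp only [hfirst, hlast, Int.cast_natCast, Int.cast_zero] at ex ey
    simp only [hx, hy, Finset.sum_neg_distrib, ex, ey]
    ring

/-- `truncRect m n r` is the region of a convex integral path from `(0,n)` via `(m-1,n)` and `(m,n-r)`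
to `(m,0)`. The vertices of a path have to be distinct, so the cases are distinguished by which of
these four points coincide. -/
lemma exists_path {m n r : ℕ} (hrm : r ≤ m) (hrn : r ≤ n) :
    ∃ Λ : ConvexIntegralPath, Λ.latticePointCount = (m + 1) * (n + 1) - r ∧
      ∀ a b : ℝ, 0 < a → 0 < b →
        pathLength (Set.Icc 0 a ×ˢ Set.Icc 0 b) Λ = a * m + b * n := by
  obtain ⟨v, rfl⟩ := Nat.exists_eq_add_of_le' hrn
  have hr0 : (0 : ℝ) ≤ r := by positivity
  have hv0 : (0 : ℝ) ≤ v := by positivity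
  rcases Nat.lt_or_ge m 2 with hm2 | hm2
  · interval_cases m
    · obtain rfl : r = 0 := by omega
      rcases Nat.eq_zero_or_pos v with rfl | hv
      · refine exists_path_of_vertices hrm hrn
          ![(0, 0)] ?_ ?_ ?_ ?_ ?_ ?_ ?_
          ⟨0, ?_, ?_⟩ ⟨1, ?_, ?_⟩ ⟨1, ?_, ?_⟩ ⟨1, ?_, ?_⟩ ⟨1, ?_, ?_⟩
        · intro i j h
          fin_cases i <;> fin_cases j <;> simp at h ⊢ <;> omega
        · simp
        · simp [Fin.last]
        · intro i
          fin_cases i <;> simp <;> omega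
        · intro i
          fin_cases i <;> simp <;> omega
        · intro i j
          fin_cases i <;> fin_cases j <;> simp [cross, closedVerts_eq_vecCons] <;> nlinarith
        · intro i
          fin_cases i <;> simp [truncRect] <;> (repeat' apply And.intro) <;> nlinarith
        all_goals simp [closedVerts_eq_vecCons]
      · refine exists_path_of_vertices hrm hrn
          ![(0, ((v + 0 : ℕ) : ℤ)), (0, 0)] ?_ ?_ ?_ ?_ ?_ ?_ ?_
          ⟨0, ?_, ?_⟩ ⟨1, ?_, ?_⟩ ⟨1, ?_, ?_⟩ ⟨1, ?_, ?_⟩ ⟨2, ?_, ?_⟩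
        · intro i j h
          fin_cases i <;> fin_cases j <;> simp [Prod.ext_iff] at h ⊢ <;> omega
        · simp
        · simp [Fin.last]
        · intro i
          fin_cases i <;> simp <;> omega
        · intro i
          fin_cases i <;> simp <;> omega
        · intro i j
          fin_cases i <;> fin_cases j <;> simp [cross, closedVerts_eq_vecCons] <;> nlinarith
        · intro i
          fin_cases i <;> simp [truncRect] <;> (repeat' apply And.intro) <;> nlinarith
        all_goals simp [closedVerts_eq_vecCons]
    · rcases Nat.eq_zero_or_pos v with rfl | hv
      · refine exists_path_of_vertices hrm hrn
          ![(0, ((0 + r : ℕ) : ℤ)), (1, 0)] ?_ ?_ ?_ ?_ ?_ ?_ ?_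
          ⟨0, ?_, ?_⟩ ⟨1, ?_, ?_⟩ ⟨1, ?_, ?_⟩ ⟨2, ?_, ?_⟩ ⟨2, ?_, ?_⟩
        · intro i j h
          fin_cases i <;> fin_cases j <;> simp [Prod.ext_iff] at h ⊢ <;> omega
        · simp
        · simp [Fin.last]
        · intro i
          fin_cases i <;> simp <;> omega
        · intro i
          fin_cases i <;> simp <;> omega
        · intro i j
          fin_cases i <;> fin_cases j <;> simp [cross, closedVerts_eq_vecCons] <;> nlinarith
        · intro i
          fin_cases i <;> simp [truncRect] <;> (repeat' apply And.intro) <;> nlinarith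
        all_goals simp [closedVerts_eq_vecCons]
      · refine exists_path_of_vertices hrm hrn
          ![(0, ((v + r : ℕ) : ℤ)), (1, (v : ℤ)), (1, 0)] ?_ ?_ ?_ ?_ ?_ ?_ ?_
          ⟨0, ?_, ?_⟩ ⟨1, ?_, ?_⟩ ⟨1, ?_, ?_⟩ ⟨2, ?_, ?_⟩ ⟨3, ?_, ?_⟩
        · intro i j h
          fin_cases i <;> fin_cases j <;> simp [Prod.ext_iff] at h ⊢ <;> omega
        · simp
        · simp [Fin.last]
        · intro i
          fin_cases i <;> simp <;> omega
        · intro i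
          fin_cases i <;> simp <;> omega
        · intro i j
          fin_cases i <;> fin_cases j <;> simp [cross, closedVerts_eq_vecCons] <;> nlinarith
        · intro i
          fin_cases i <;> simp [truncRect] <;> (repeat' apply And.intro) <;> nlinarith
        all_goals simp [closedVerts_eq_vecCons]
  · obtain ⟨u, rfl⟩ := Nat.exists_eq_add_of_le' hm2
    have hu0 : (0 : ℝ) ≤ u := by positivity
    rcases Nat.eq_zero_or_pos v with rfl | hv
    · refine exists_path_of_vertices hrm hrn
        ![(0, ((0 + r : ℕ) : ℤ)), ((u : ℤ) + 1, ((0 + r : ℕ) : ℤ)), (((u + 2 : ℕ) : ℤ), 0)] ?_ ?_ ?_ ?_ ?_ ?_ ?_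
        ⟨0, ?_, ?_⟩ ⟨1, ?_, ?_⟩ ⟨2, ?_, ?_⟩ ⟨3, ?_, ?_⟩ ⟨3, ?_, ?_⟩
      · intro i j h
        fin_cases i <;> fin_cases j <;> simp [Prod.ext_iff] at h ⊢ <;> omega
      · simp
      · simp [Fin.last]
      · intro i
        fin_cases i <;> simp <;> omega
      · intro i
        fin_cases i <;> simp <;> omega
      · intro i j
        fin_cases i <;> fin_cases j <;> simp [cross, closedVerts_eq_vecCons] <;> nlinarith
      · intro i
        fin_cases i <;> simp [truncRect] <;> (repeat' apply And.intro) <;> nlinarith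
      all_goals simp [closedVerts_eq_vecCons]
    · refine exists_path_of_vertices hrm hrn
        ![(0, ((v + r : ℕ) : ℤ)), ((u : ℤ) + 1, ((v + r : ℕ) : ℤ)), ((u : ℤ) + 2, (v : ℤ)),
          (((u + 2 : ℕ) : ℤ), 0)] ?_ ?_ ?_ ?_ ?_ ?_ ?_
        ⟨0, ?_, ?_⟩ ⟨1, ?_, ?_⟩ ⟨2, ?_, ?_⟩ ⟨3, ?_, ?_⟩ ⟨4, ?_, ?_⟩
      · intro i j h
        fin_cases i <;> fin_cases j <;> simp [Prod.ext_iff] at h ⊢ <;> omega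
      · simp
      · simp [Fin.last]
      · intro i
        fin_cases i <;> simp <;> omega
      · intro i
        fin_cases i <;> simp <;> omega
      · intro i j
        fin_cases i <;> fin_cases j <;> simp [cross, closedVerts_eq_vecCons] <;> nlinarith
      · intro i
        fin_cases i <;> simp [truncRect] <;> (repeat' apply And.intro) <;> nlinarith
      all_goals simp [closedVerts_eq_vecCons]

/-! ### The capacity formula -/

/-- A minimiser exists: capping `m` and `n` at `k` preserves `k + 1 ≤ (m + 1) * (n + 1)`, so only
finitely many pairs matter. -/
lemma exists_minimal_box {a b : ℝ} (ha : 0 < a) (hb : 0 < b) (k : ℕ) :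
    ∃ m n : ℕ, k + 1 ≤ (m + 1) * (n + 1) ∧
      ∀ m' n' : ℕ, k + 1 ≤ (m' + 1) * (n' + 1) → a * m + b * n ≤ a * m' + b * n' := by
  let T := (Finset.range (k + 1) ×ˢ Finset.range (k + 1)).filter
    (fun q => k + 1 ≤ (q.1 + 1) * (q.2 + 1))
  have hT : T.Nonempty := ⟨(k, 0), by simp [T]⟩
  obtain ⟨⟨m, n⟩, hmn, hmin⟩ := T.exists_min_image (fun q => a * q.1 + b * q.2) hT
  refine ⟨m, n, (Finset.mem_filter.1 hmn).2, fun m' n' h => ?_⟩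
  have hmem : (min m' k, min n' k) ∈ T := by
    simp only [T, Finset.mem_filter, Finset.mem_product, Finset.mem_range]
    refine ⟨⟨by omega, by omega⟩, ?_⟩
    rcases le_total m' k with h1 | h1
    · rcases le_total n' k with h2 | h2
      · rwa [min_eq_left h1, min_eq_left h2]
      · rw [min_eq_right h2]
        exact Nat.le_mul_of_pos_left _ (Nat.succ_pos _)
    · rw [min_eq_right h1]
      exact Nat.le_mul_of_pos_right _ (Nat.succ_pos _)
  refine (hmin _ hmem).trans (add_le_add ?_ ?_)
  · exact mul_le_mul_of_nonneg_left (by exact_mod_cast min_le_left m' k) ha.le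
  · exact mul_le_mul_of_nonneg_left (by exact_mod_cast min_le_left n' k) hb.le

/-- For `Ω = [0,a] × [0,b]` (so that `X_Ω` is the polydisk `P(a,b)`) and `k ≥ 0`, the minimum
of `ℓ_Ω(Λ)` over convex integral paths `Λ` with `L̂(Λ) = k + 1` exists and equals
`min {a m + b n : m, n ∈ ℕ, (m+1)(n+1) ≥ k + 1}`. -/
theorem polydisk_capacity_formula (a b : ℝ) (ha : 0 < a) (hb : 0 < b) (k : ℕ) :
    ∃ c : ℝ,
      IsLeast {x : ℝ | ∃ Λ : ConvexIntegralPath, Λ.latticePointCount = k + 1 ∧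
        x = pathLength (Set.Icc 0 a ×ˢ Set.Icc 0 b) Λ} c ∧
      IsLeast {x : ℝ | ∃ m n : ℕ, k + 1 ≤ (m + 1) * (n + 1) ∧ x = a * m + b * n} c := by
  obtain ⟨m, n, hmn, hmin⟩ := exists_minimal_box ha hb k
  -- Neither side of a minimal rectangle can be shortened, so the excess of lattice points is small.
  have hm : m * (n + 1) ≤ k := by
    by_contra! hlt
    rcases m with - | m
    · omega
    · have := hmin m n hlt
      push_cast at this
      linarith
  have hn : (m + 1) * n ≤ k := by
    by_contra! hlt
    rcases n with - | n
    · omega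
    · have := hmin m n hlt
      push_cast at this
      linarith
  have e₁ : (m + 1) * (n + 1) = m * (n + 1) + (n + 1) := by ring
  have e₂ : (m + 1) * (n + 1) = (m + 1) * n + (m + 1) := by ring
  obtain ⟨Λ, hcount, hlen⟩ := exists_path (m := m) (n := n) (r := (m + 1) * (n + 1) - (k + 1))
    (by omega) (by omega)
  refine ⟨a * m + b * n, ⟨⟨Λ, by omega, (hlen a b ha hb).symm⟩, ?_⟩, ⟨m, n, hmn, rfl⟩, ?_⟩
  · rintro x ⟨Λ', hΛ', rfl⟩
    obtain ⟨m', n', h, hle⟩ := exists_box_le_pathLength ha hb Λ'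
    exact (hmin m' n' (hΛ' ▸ h)).trans hle
  · rintro x ⟨m', n', h, rfl⟩
    exact hmin m' n' h
end
end

section
/- Let Ω ⊂ [0,∞)² be a compact set such that Ω̂ = {μ ∈ ℝ² : (|μ₁|,|μ₂|) ∈ Ω} is convex and such that Ω contains a point with both coordinates positive. Then for every nonnegative integer k, the infimum of ℓ_Ω(Λ) over convex integral paths Λ with L̂(Λ) ≥ k + 1 and the infimum of ℓ_Ω(Λ) over convex integral paths Λ with L̂(Λ) = k + 1 are both attained, and they are equal. -/
/-!
Both minima are computed by a finite family of optimal paths. Call a finite set `S` of lattice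
points in the quadrant a convex lower set if it is a nonempty lower set that contains all lattice
points of its convex hull. Three facts carry the argument.

* Each convex lower set `S` is the set of lattice points of the region of a convex integral path
  `Λ_S`, the upper right boundary of its convex hull (`exists_path_of_finset`). This path is no
  longer than any path `Λ'` whose vertices dominate `S`, in the sense that each functional with
  nonnegative coefficients is at least as large at some vertex of `Λ'` as on `S`
  (`IsConvexLower.exists_path`, from `length_le_of_dominated`).
* The lattice points dominated by a path `Λ` form a convex lower set that contains those of its
  region, so there are at least `L̂(Λ)` of them (`exists_dominated_set`).
* A convex lower set can be reduced to any smaller positive cardinality, one extreme point at a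
  time (`IsConvexLower.exists_subset_card`).

Given `Λ` with `L̂(Λ) ≥ k + 1`, these yield a convex lower set `T` with exactly `k + 1` points that
is dominated by `Λ`, whence `ℓ_Ω(Λ_T) ≤ ℓ_Ω(Λ)` and `L̂(Λ_T) = k + 1`. Since there are only finitely
many convex lower sets with `k + 1` points, the shortest of the paths `Λ_T` attains both minima.

The length comparison is a summation by parts. If `W j ∈ Ω` maximizes the pairing with the `j`-th
edge of a strictly convex path, its length is the sum over the vertices `q j` of the values of
`W (j - 1) - W j` (with the sign of the second coordinate reversed) at `q j`, plus end terms. By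
strict convexity these functionals have nonnegative coefficients and rotate clockwise. They are
therefore maximized along the outer path at indices that increase with `j`, and the outer length is
bounded below by the same sum with `q j` replaced by these maximizers.
-/

open scoped BigOperators

noncomputable section

/-! ### The norm -/

/-- Since `Ω̂` is invariant under sign changes, `‖v‖_Ω*` is the maximum of
`|v₁| W₁ + |v₂| W₂` over `W ∈ Ω`, and the maximum is attained by compactness. -/
lemma dualNorm_isGreatest {Ω : Set (ℝ × ℝ)} (hcomp : IsCompact Ω)
    (hquad : Ω ⊆ {v : ℝ × ℝ | 0 ≤ v.1 ∧ 0 ≤ v.2}) (hne : Ω.Nonempty) (v : ℝ × ℝ) :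
    (∃ W ∈ Ω, dualNorm Ω v = |v.1| * W.1 + |v.2| * W.2) ∧
      ∀ W ∈ Ω, |v.1| * W.1 + |v.2| * W.2 ≤ dualNorm Ω v := by
  obtain ⟨W₀, hW₀, hmax⟩ := hcomp.exists_isMaxOn hne
    (f := fun W : ℝ × ℝ => |v.1| * W.1 + |v.2| * W.2) (by fun_prop)
  have hub : ∀ x ∈ {x : ℝ | ∃ w ∈ hatSet Ω, x = v.1 * w.1 + v.2 * w.2},
      x ≤ |v.1| * W₀.1 + |v.2| * W₀.2 := by
    rintro x ⟨w, hw, rfl⟩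
    have h1 : |v.1| * |w.1| + |v.2| * |w.2| ≤ |v.1| * W₀.1 + |v.2| * W₀.2 := hmax hw
    have h2 : v.1 * w.1 ≤ |v.1| * |w.1| := by rw [← abs_mul]; exact le_abs_self _
    have h3 : v.2 * w.2 ≤ |v.2| * |w.2| := by rw [← abs_mul]; exact le_abs_self _
    linarith
  have hsign : ∀ a b : ℝ, 0 ≤ b → ∃ c : ℝ, |c| = b ∧ |a| * b = a * c := by
    intro a b hb
    rcases le_total 0 a with h | h
    · exact ⟨b, abs_of_nonneg hb, by rw [abs_of_nonneg h]⟩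
    · exact ⟨-b, by rw [abs_neg, abs_of_nonneg hb], by rw [abs_of_nonpos h]; ring⟩
  have hmem : ∀ W ∈ Ω, |v.1| * W.1 + |v.2| * W.2 ∈
      {x : ℝ | ∃ w ∈ hatSet Ω, x = v.1 * w.1 + v.2 * w.2} := by
    intro W hW
    obtain ⟨c, hc, hc'⟩ := hsign v.1 W.1 (hquad hW).1
    obtain ⟨d, hd, hd'⟩ := hsign v.2 W.2 (hquad hW).2
    refine ⟨(c, d), ?_, by simp only [hc', hd']⟩
    simp only [hatSet, Set.mem_ofPred_eq, hc, hd]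
    exact hW
  have hge : ∀ W ∈ Ω, |v.1| * W.1 + |v.2| * W.2 ≤ dualNorm Ω v :=
    fun W hW => le_csSup ⟨_, hub⟩ (hmem W hW)
  exact ⟨⟨W₀, hW₀, le_antisymm (csSup_le ⟨_, hmem W₀ hW₀⟩ hub) (hge W₀ hW₀)⟩, hge⟩

/-! ### Comparison of lengths -/

/-- If `(b', a')` is strictly clockwise from `(b, a)` and `(c, d)` lies between them, all of these
being normal directions, then `(c, d)` is nonnegative. Moreover, on vectors `(p, q)` with `0 ≤ p`,
nonnegativity propagates clockwise among the functionals `(b, a)`, `(c, d)`, `(b', a')`. -/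
lemma cone_facts (a b a' b' c d : ℝ) (ha0 : 0 ≤ a) (hb0 : 0 ≤ b) (haz : 0 ≤ a') (hbz : 0 ≤ b')
    (ht : b * a' < a * b') (hcd1 : b * d ≤ a * c) (hcd2 : a' * c ≤ b' * d) :
    0 ≤ c ∧ 0 ≤ d ∧ (∀ p q : ℝ, 0 ≤ p → 0 ≤ b * p + a * q → 0 ≤ c * p + d * q) ∧
      (∀ p q : ℝ, 0 ≤ p → 0 ≤ b * p + a * q → 0 ≤ b' * p + a' * q) ∧
      (∀ p q : ℝ, 0 ≤ p → 0 < c * p + d * q → 0 ≤ b' * p + a' * q) := by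
  have hba' := mul_nonneg hb0 haz
  have hapos : 0 < a := by
    rcases ha0.eq_or_lt with h | h
    · rw [← h] at ht; linarith
    · exact h
  have hc0 : 0 ≤ c := by
    have h : 0 ≤ c * (a * b' - b * a') := by
      linarith [mul_le_mul_of_nonneg_left hcd1 hbz, mul_le_mul_of_nonneg_left hcd2 hb0]
    exact nonneg_of_mul_nonneg_left h (by linarith)
  have hd0 : 0 ≤ d := by
    have h : 0 ≤ d * (a * b' - b * a') := by
      linarith [mul_le_mul_of_nonneg_left hcd1 haz, mul_le_mul_of_nonneg_left hcd2 ha0]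
    exact nonneg_of_mul_nonneg_left h (by linarith)
  refine ⟨hc0, hd0, fun p q hp h => ?_, fun p q hp h => ?_, fun p q hp h => ?_⟩
  · have h' : 0 ≤ a * (c * p + d * q) := by
      linarith [mul_le_mul_of_nonneg_right hcd1 hp, mul_nonneg hd0 h]
    exact nonneg_of_mul_nonneg_right h' hapos
  · have h' : 0 ≤ a * (b' * p + a' * q) := by
      linarith [mul_le_mul_of_nonneg_right ht.le hp, mul_nonneg haz h]
    exact nonneg_of_mul_nonneg_right h' hapos
  · rcases hd0.eq_or_lt with h0 | h0
    · have hcpos : 0 < c := by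
        rcases hc0.eq_or_lt with h1 | h1
        · rw [← h0, ← h1] at h; linarith
        · exact h1
      have ha' : a' = 0 := by
        rw [← h0, mul_zero] at hcd2
        exact le_antisymm (nonpos_of_mul_nonpos_left hcd2 hcpos) haz
      rw [ha', zero_mul, add_zero]
      exact mul_nonneg hbz hp
    · have h' : 0 ≤ d * (b' * p + a' * q) := by
        linarith [mul_le_mul_of_nonneg_right hcd2 hp, mul_nonneg haz h.le]
      exact nonneg_of_mul_nonneg_right h' h0

/-- Length comparison. The inner path `(u j, v j)` is monotone and strictly convex, the outer path
`(x i, y i)` is arbitrary, and every inner vertex is dominated by the outer vertices: no functional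
with nonnegative coefficients is larger at the inner vertex than at all outer ones. Then the
inner path is not longer than the outer one.

With `W j ∈ Ω` a maximizer for the `j`-th inner edge, summation by parts writes the inner length as
a sum of the functionals `c j = W (j - 1) - W j` (up to the sign of the second coordinate) at the
inner vertices. These functionals have nonnegative coefficients and rotate clockwise, so they are
maximized at successive vertices of the outer path, once `x` is replaced by its running maximum. -/
lemma length_le_of_dominated {Ω : Set (ℝ × ℝ)} (hcomp : IsCompact Ω)
    (hquad : Ω ⊆ {v : ℝ × ℝ | 0 ≤ v.1 ∧ 0 ≤ v.2}) (hne : Ω.Nonempty)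
    (M N : ℕ) (u v x y : ℕ → ℝ)
    (hu : ∀ i < M, u i ≤ u (i + 1)) (hv : ∀ i < M, v (i + 1) ≤ v i)
    (hturn : ∀ i, i + 1 < M → (v i - v (i + 1)) * (u (i + 2) - u (i + 1)) <
      (u (i + 1) - u i) * (v (i + 1) - v (i + 2)))
    (hu0 : u 0 = 0) (hvM : v M = 0) (hx0 : x 0 = 0) (hyN : y N = 0)
    (hdom : ∀ j ≤ M, ∀ c d : ℝ, 0 ≤ c → 0 ≤ d → ∃ i ≤ N, c * u j + d * v j ≤ c * x i + d * y i) :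
    ∑ i ∈ Finset.range M, dualNorm Ω (u (i + 1) - u i, v (i + 1) - v i) ≤
      ∑ i ∈ Finset.range N, dualNorm Ω (x (i + 1) - x i, y (i + 1) - y i) := by
  set L : ℕ → ℝ := fun i => dualNorm Ω (x (i + 1) - x i, y (i + 1) - y i) with hL
  set E : ℕ → ℝ := fun i => dualNorm Ω (u (i + 1) - u i, v (i + 1) - v i) with hE
  set X : ℕ → ℝ := fun n => partialSups x n with hX
  have hXmono : Monotone X := (partialSups x).monotone
  have hxX : ∀ i, x i ≤ X i := fun i => le_partialSups x i
  have hX0 : X 0 = 0 := by simp [hX, hx0]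
  have hΔ : ∀ i, X (i + 1) - X i ≤ |x (i + 1) - x i| := by
    intro i
    have h1 : X (i + 1) = max (X i) (x (i + 1)) := by simp [hX, partialSups_add_one]
    rw [h1]
    rcases max_cases (X i) (x (i + 1)) with h | h
    · rw [h.1, sub_self]; exact abs_nonneg _
    · rw [h.1]; linarith [le_abs_self (x (i + 1) - x i), hxX i]
  have hLge : ∀ W ∈ Ω, ∀ i, (X (i + 1) - X i) * W.1 + |y (i + 1) - y i| * W.2 ≤ L i := by
    intro W hW i
    have h1 := (dualNorm_isGreatest hcomp hquad hne (x (i + 1) - x i, y (i + 1) - y i)).2 W hW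
    have h2 := mul_le_mul_of_nonneg_right (hΔ i) (hquad hW).1
    simp only at h1
    linarith
  -- For each `W ∈ Ω` this potential can only increase along the outer path.
  have hpot : ∀ W ∈ Ω, Monotone
      (fun n => ∑ i ∈ Finset.range n, L i - X n * W.1 + y n * W.2) := by
    intro W hW
    refine monotone_nat_of_le_succ fun n => ?_
    rw [Finset.sum_range_succ]
    have h1 := hLge W hW n
    have h2 := mul_le_mul_of_nonneg_right (neg_abs_le (y (n + 1) - y n)) (hquad hW).2
    linarith
  have hpot1 : ∀ W ∈ Ω, Monotone (fun n => ∑ i ∈ Finset.range n, L i - X n * W.1) := by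
    intro W hW
    refine monotone_nat_of_le_succ fun n => ?_
    rw [Finset.sum_range_succ]
    have h1 := hLge W hW n
    have h2 := mul_nonneg (abs_nonneg (y (n + 1) - y n)) (hquad hW).2
    linarith
  rcases Nat.eq_zero_or_pos M with rfl | hM
  · obtain ⟨W, hW⟩ := hne
    have h1 := hpot1 W hW (Nat.zero_le N)
    have h2 : 0 ≤ X N := hX0 ▸ hXmono (Nat.zero_le N)
    have h3 := mul_nonneg h2 (hquad hW).1
    simp only [Finset.range_zero, Finset.sum_empty, hX0] at h1 ⊢
    linarith
  choose W hWΩ hWE using fun j =>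
    (dualNorm_isGreatest hcomp hquad hne (u (j + 1) - u j, v (j + 1) - v j)).1
  have hEeq : ∀ j < M, E j = (u (j + 1) - u j) * (W j).1 + (v j - v (j + 1)) * (W j).2 := by
    intro j hj
    rw [hE]; simp only; rw [hWE j]
    simp only
    rw [abs_of_nonneg (sub_nonneg.2 (hu j hj)), abs_of_nonpos (sub_nonpos.2 (hv j hj))]
    ring
  have hEge : ∀ j < M, ∀ V ∈ Ω,
      (u (j + 1) - u j) * V.1 + (v j - v (j + 1)) * V.2 ≤ E j := by
    intro j hj V hV
    have := (dualNorm_isGreatest hcomp hquad hne (u (j + 1) - u j, v (j + 1) - v j)).2 V hV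
    simp only at this
    rw [abs_of_nonneg (sub_nonneg.2 (hu j hj)), abs_of_nonpos (sub_nonpos.2 (hv j hj))] at this
    linarith
  -- The outer index `n` matched with the inner vertex `j`: no earlier outer vertex is higher in the
  -- normal direction of the `j`-th inner edge, and the partial lengths already compare.
  have key : ∀ j < M, ∃ n ≤ N,
      (∀ m < n, 0 ≤ (v j - v (j + 1)) * (X n - X m) + (u (j + 1) - u j) * (y n - y m)) ∧
      ∑ i ∈ Finset.range j, E i - u j * (W j).1 + v j * (W j).2 ≤
        ∑ i ∈ Finset.range n, L i - X n * (W j).1 + y n * (W j).2 := by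
    intro j
    induction j with
    | zero =>
      intro _
      obtain ⟨n, hn, hmax⟩ := Finset.exists_max_image (Finset.range (N + 1)) y ⟨0, by simp⟩
      have hnN : n ≤ N := by simpa [Nat.lt_succ_iff] using hn
      refine ⟨n, hnN, fun m hm => ?_, ?_⟩
      · have h1 : X m ≤ X n := hXmono hm.le
        have h2 : y m ≤ y n := hmax m (by simp; omega)
        have := hu 0 hM
        have := hv 0 hM
        exact add_nonneg (mul_nonneg (by linarith) (by linarith))
          (mul_nonneg (by linarith) (by linarith))
      · obtain ⟨i, hi, hdi⟩ := hdom 0 (Nat.zero_le _) 0 1 le_rfl zero_le_one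
        have h1 : y i ≤ y n := hmax i (by simp; omega)
        have h2 := hpot1 _ (hWΩ 0) (Nat.zero_le n)
        have h3 : v 0 ≤ y n := by linarith
        have h4 := mul_le_mul_of_nonneg_right h3 (hquad (hWΩ 0)).2
        simp only [Finset.range_zero, Finset.sum_empty, hX0, hu0] at h2 ⊢
        linarith
    | succ j ih =>
      intro hj
      obtain ⟨n, hnN, hI, hF⟩ := ih (by omega)
      have hu1 := hu j (by omega)
      have hu2 := hu (j + 1) hj
      have hv1 := hv j (by omega)
      have hv2 := hv (j + 1) hj
      have ht := hturn j hj
      have hδ1 := hEge j (by omega) _ (hWΩ (j + 1))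
      rw [hEeq j (by omega)] at hδ1
      have hδ2 := hEge (j + 1) hj _ (hWΩ j)
      rw [hEeq (j + 1) hj] at hδ2
      rw [Finset.sum_range_succ, hEeq j (by omega)]
      set a := u (j + 1) - u j with ha
      set b := v j - v (j + 1) with hb
      have e1 : u (j + 1 + 1) - u (j + 1) = u (j + 2) - u (j + 1) := rfl
      have e2 : v (j + 1) - v (j + 1 + 1) = v (j + 1) - v (j + 2) := rfl
      rw [e1, e2] at hδ2 ⊢
      set a' := u (j + 2) - u (j + 1) with ha'
      set b' := v (j + 1) - v (j + 2) with hb'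
      have ha0 : 0 ≤ a := by linarith
      have hb0 : 0 ≤ b := by linarith
      have haz : 0 ≤ a' := sub_nonneg.2 hu2
      have hbz : 0 ≤ b' := sub_nonneg.2 hv2
      set c := (W j).1 - (W (j + 1)).1 with hc
      set d := (W (j + 1)).2 - (W j).2 with hd
      have hcd1 : b * d ≤ a * c := by rw [hc, hd]; linarith
      have hcd2 : a' * c ≤ b' * d := by rw [hc, hd]; linarith
      clear_value c d a b a' b'
      obtain ⟨hc0, hd0, hrot1, hrot2, hrot3⟩ :=
        cone_facts a b a' b' c d ha0 hb0 haz hbz ht hcd1 hcd2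
      -- The first maximizer after `n`; taking the first one matters when `(c, d) = 0`.
      have hex : ∃ m, (n ≤ m ∧ m ≤ N) ∧
          ∀ l, n ≤ l → l ≤ N → c * X l + d * y l ≤ c * X m + d * y m := by
        obtain ⟨m, hm, hmax⟩ := Finset.exists_max_image (Finset.Icc n N)
          (fun m => c * X m + d * y m) ⟨n, by simp [hnN]⟩
        exact ⟨m, Finset.mem_Icc.1 hm, fun l h1 h2 => hmax l (Finset.mem_Icc.2 ⟨h1, h2⟩)⟩
      classical
      obtain ⟨n', ⟨⟨hnn', hn'N⟩, hmax⟩, hfirst⟩ : ∃ n', ((n ≤ n' ∧ n' ≤ N) ∧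
          ∀ l, n ≤ l → l ≤ N → c * X l + d * y l ≤ c * X n' + d * y n') ∧
          ∀ m < n', ¬ ((n ≤ m ∧ m ≤ N) ∧
          ∀ l, n ≤ l → l ≤ N → c * X l + d * y l ≤ c * X m + d * y m) :=
        ⟨Nat.find hex, Nat.find_spec hex, fun m hm => Nat.find_min hex hm⟩
      have hge : ∀ m, n ≤ m → m < n' → 0 < c * (X n' - X m) + d * (y n' - y m) := by
        intro m h1 h2
        have := hfirst m h2
        push Not at this
        obtain ⟨l, hl1, hl2, hl3⟩ := this ⟨h1, by omega⟩
        have := hmax l hl1 hl2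
        linarith
      have hn1 : 0 ≤ b' * (X n' - X n) + a' * (y n' - y n) := by
        rcases hnn'.eq_or_lt with h | h
        · rw [h]; simp
        · exact hrot3 _ _ (sub_nonneg.2 (hXmono hnn')) (hge n le_rfl h)
      refine ⟨n', hn'N, fun m hm => ?_, ?_⟩
      · rcases le_or_gt n m with h | h
        · exact hrot3 _ _ (sub_nonneg.2 (hXmono hm.le)) (hge m h hm)
        · have := hrot2 _ _ (sub_nonneg.2 (hXmono h.le)) (hI m h)
          linarith
      · have h1 := hpot _ (hWΩ j) hnn'
        simp only at h1
        obtain ⟨i, hi, hdi⟩ := hdom (j + 1) hj.le c d hc0 hd0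
        have h2 : c * x i ≤ c * X i := mul_le_mul_of_nonneg_left (hxX i) hc0
        have h3 : c * X i + d * y i ≤ c * X n' + d * y n' := by
          rcases le_or_gt n i with h | h
          · exact hmax i h hi
          · have := hrot1 _ _ (sub_nonneg.2 (hXmono h.le)) (hI i h)
            have := hmax n le_rfl hnN
            linarith
        have h4 : c * u (j + 1) + d * v (j + 1) ≤ c * X n' + d * y n' := by linarith
        rw [hc, hd] at h4
        rw [ha, hb]
        linarith
  obtain ⟨M, rfl⟩ : ∃ K, M = K + 1 := ⟨M - 1, by omega⟩
  obtain ⟨n, hnN, -, hF⟩ := key M (Nat.lt_succ_self M)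
  have h1 := hpot _ (hWΩ M) hnN
  obtain ⟨i, hi, hdi⟩ := hdom (M + 1) le_rfl 1 0 zero_le_one le_rfl
  have h2 : u (M + 1) ≤ X N := by linarith [hxX i, hXmono hi]
  have h3 := mul_le_mul_of_nonneg_right h2 (hquad (hWΩ M)).1
  change ∑ i ∈ Finset.range (M + 1), E i ≤ _
  rw [Finset.sum_range_succ, hEeq M (Nat.lt_succ_self M)]
  simp only [hyN] at h1
  rw [hvM]
  linarith

/-! ### The upper hull of a finite set of lattice points -/

/-- Gift wrapping. Starting at a point `q` of `S` at which `S` is supported by the functional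
`(ν₁, ν₂)`, the upper right part of the boundary of the convex hull of `S` is a strictly convex
monotone path from `q` to the corner `(A, 0)`; the first edge turns strictly from the line
given by `(ν₁, ν₂)`. -/
lemma exists_hull_path_aux (S : Finset (ℤ × ℤ)) (A : ℤ) (hA : (A, 0) ∈ S)
    (hx : ∀ s ∈ S, s.1 ≤ A) (hy : ∀ s ∈ S, 0 ≤ s.2) (n : ℕ) :
    ∀ q ∈ S, ∀ ν₁ ν₂ : ℤ, 0 < ν₂ →
      (∀ s ∈ S, ν₁ * s.1 + ν₂ * s.2 ≤ ν₁ * q.1 + ν₂ * q.2) →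
      (∀ s ∈ S, q.1 ≤ s.1 → s.2 ≤ q.2) →
      (∀ s ∈ S, s ≠ q → q.1 ≤ s.1 → s.2 ≤ q.2 → ν₁ * s.1 + ν₂ * s.2 < ν₁ * q.1 + ν₂ * q.2) →
      A - q.1 + q.2 ≤ n →
      ∃ (N : ℕ) (p : ℕ → ℤ × ℤ), p 0 = q ∧ p N = (A, 0) ∧ (∀ i ≤ N, p i ∈ S) ∧
        (∀ i < N, (p i).1 ≤ (p (i + 1)).1 ∧ (p (i + 1)).2 ≤ (p i).2 ∧ p i ≠ p (i + 1) ∧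
          ∀ s ∈ S, ((p i).2 - (p (i + 1)).2) * (s.1 - (p i).1) +
            ((p (i + 1)).1 - (p i).1) * (s.2 - (p i).2) ≤ 0) ∧
        (0 < N → ν₁ * ((p 1).1 - q.1) < ν₂ * (q.2 - (p 1).2)) ∧
        ∀ i, i + 1 < N →
          ((p i).2 - (p (i + 1)).2) * ((p (i + 2)).1 - (p (i + 1)).1) <
            ((p (i + 1)).1 - (p i).1) * ((p (i + 1)).2 - (p (i + 2)).2) := by
  induction n using Nat.strong_induction_on with
  | _ n ih =>
  intro q hq ν₁ ν₂ hν hsupp hcorner hstrict hn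
  by_cases hqA : q = (A, 0)
  · refine ⟨0, fun _ => q, rfl, hqA, fun _ _ => hq, ?_, ?_, ?_⟩ <;> intros <;> omega
  -- The points of `S` to the lower right of `q`, ordered by slope and then by distance.
  set T := S.filter (fun s => s ≠ q ∧ q.1 ≤ s.1 ∧ s.2 ≤ q.2) with hT
  have hTne : T.Nonempty :=
    ⟨(A, 0), by simp [hT, hA, Ne.symm hqA, hx q hq, hy q hq]⟩
  obtain ⟨r, hrT, hrmax⟩ := Finset.exists_max_image T
    (fun s => toLex (((s.1 - q.1 : ℤ) : ℚ) / ((s.1 - q.1 + (q.2 - s.2) : ℤ) : ℚ),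
      s.1 - q.1 + (q.2 - s.2))) hTne
  have hpos : ∀ s ∈ T, 0 < s.1 - q.1 + (q.2 - s.2) := by
    intro s hs
    simp only [hT, Finset.mem_filter] at hs
    obtain ⟨-, h1, h2, h3⟩ := hs
    by_contra hcon
    exact h1 (Prod.ext (by omega) (by omega))
  have hmax : ∀ s ∈ T, (s.1 - q.1) * (q.2 - r.2) < (r.1 - q.1) * (q.2 - s.2) ∨
      ((s.1 - q.1) * (q.2 - r.2) = (r.1 - q.1) * (q.2 - s.2) ∧
        s.1 - q.1 + (q.2 - s.2) ≤ r.1 - q.1 + (q.2 - r.2)) := by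
    intro s hs
    have h1 := hpos s hs
    have h2 := hpos r hrT
    have h3 := hrmax s hs
    have h1' : (0 : ℚ) < ((s.1 - q.1 + (q.2 - s.2) : ℤ) : ℚ) := by exact_mod_cast h1
    have h2' : (0 : ℚ) < ((r.1 - q.1 + (q.2 - r.2) : ℤ) : ℚ) := by exact_mod_cast h2
    rw [Prod.Lex.le_iff] at h3
    simp only [ofLex_toLex] at h3
    rcases h3 with h3 | ⟨h3, h4⟩
    · left
      rw [div_lt_div_iff₀ h1' h2'] at h3
      have h5 : (s.1 - q.1) * (r.1 - q.1 + (q.2 - r.2)) <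
        (r.1 - q.1) * (s.1 - q.1 + (q.2 - s.2)) := by exact_mod_cast h3
      nlinarith
    · right
      refine ⟨?_, h4⟩
      rw [div_eq_div_iff h1'.ne' h2'.ne'] at h3
      have h5 : (s.1 - q.1) * (r.1 - q.1 + (q.2 - r.2)) =
        (r.1 - q.1) * (s.1 - q.1 + (q.2 - s.2)) := by exact_mod_cast h3
      nlinarith
  have hr := hrT
  simp only [hT, Finset.mem_filter] at hr
  obtain ⟨hrS, hrq, hr1, hr2⟩ := hr
  have hνr := hstrict r hrS hrq hr1 hr2
  have hrpos := hpos r hrT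
  have hsuppr : ∀ s ∈ S, (q.2 - r.2) * (s.1 - q.1) + (r.1 - q.1) * (s.2 - q.2) ≤ 0 := by
    intro s hs
    by_cases hsT : s ∈ T
    · rcases hmax s hsT with h | h <;> nlinarith
    by_cases hsq : s = q
    · simp [hsq]
    have hs' := hsupp s hs
    rcases lt_or_ge s.1 q.1 with h | h
    · have h1 : 0 ≤ (ν₂ * (q.2 - r.2) - ν₁ * (r.1 - q.1)) * (q.1 - s.1) :=
        mul_nonneg (by linarith) (by linarith)
      have h2 : (r.1 - q.1) * (ν₁ * (s.1 - q.1) + ν₂ * (s.2 - q.2)) ≤ 0 :=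
        mul_nonpos_of_nonneg_of_nonpos (by linarith) (by linarith)
      have h3 : ν₂ * ((q.2 - r.2) * (s.1 - q.1) + (r.1 - q.1) * (s.2 - q.2)) ≤ 0 := by
        nlinarith
      exact nonpos_of_mul_nonpos_right h3 hν
    · exact absurd (by simpa [hT, hs, hsq, h] using hcorner s hs h) hsT
  rcases hr1.eq_or_lt with hvert | hdx
  · -- A vertical edge can only be the last one.
    have hAT : ((A, 0) : ℤ × ℤ) ∈ T := by
      simp [hT, hA, Ne.symm hqA, hx q hq, hy q hq]
    have h1 := hsuppr _ hA
    simp only at h1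
    have hAq : A = q.1 := by
      have h2 := hx q hq
      have h3 : (q.2 - r.2) * (A - q.1) ≤ 0 := by rw [← hvert] at h1; simpa using h1
      have h4 := nonpos_of_mul_nonpos_right h3 (by omega)
      omega
    have hrA : r = (A, 0) := by
      rcases hmax _ hAT with h | ⟨-, h⟩
      · simp [← hvert, hAq] at h
      · have := hy r hrS
        simp only at h
        exact Prod.ext (by simp; omega) (by simp; omega)
    refine ⟨1, fun i => if i = 0 then q else r, by simp, by simpa using hrA, ?_, ?_, ?_, ?_⟩
    · intro i _
      dsimp only
      split_ifs <;> assumption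
    · intro i hi
      obtain rfl : i = 0 := by omega
      simpa using ⟨hr1, hr2, Ne.symm hrq, fun a b hs => hsuppr (a, b) hs⟩
    · intro _
      simp only [one_ne_zero, if_false]
      linarith
    · intro i hi
      omega
  · obtain ⟨N, p, hp0, hpN, hpS, hpe, hpt, hpturn⟩ :=
      ih (A - r.1 + r.2).toNat (by have := hx r hrS; have := hy r hrS; omega) r hrS
        (q.2 - r.2) (r.1 - q.1) (by omega)
        (by intro s hs; have := hsuppr s hs; nlinarith)
        (by
          intro s hs hsr
          have h1 := hsuppr s hs
          have h2 : 0 ≤ (q.2 - r.2) * (s.1 - r.1) := mul_nonneg (by omega) (by omega)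
          have h3 : (r.1 - q.1) * (s.2 - r.2) ≤ 0 := by nlinarith
          have h4 := nonpos_of_mul_nonpos_right h3 (by omega)
          omega)
        (by
          intro s hs hsr h1 h2
          have hsT : s ∈ T := by
            have : s ≠ q := by rintro rfl; omega
            simp only [hT, Finset.mem_filter]
            exact ⟨hs, this, by omega, by omega⟩
          rcases hmax s hsT with h | ⟨-, h⟩
          · nlinarith
          · exact absurd (Prod.ext (by omega) (by omega)) hsr)
        (by have := hx r hrS; have := hy r hrS; omega)
    refine ⟨N + 1, fun i => i.casesOn q p, rfl, hpN, ?_, ?_, ?_, ?_⟩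
    · rintro (_ | i) hi
      · exact hq
      · exact hpS i (by omega)
    · rintro (_ | i) hi
      · simp only [hp0]
        exact ⟨hr1, hr2, Ne.symm hrq, hsuppr⟩
      · exact hpe i (by omega)
    · intro _
      change ν₁ * ((p 0).1 - q.1) < ν₂ * (q.2 - (p 0).2)
      rw [hp0]
      linarith
    · rintro (_ | i) hi
      · simp only [hp0]
        exact hpt (by omega)
      · exact hpturn i (by omega)

/-! ### The convex integral path of a finite set of lattice points -/

/-- A lattice point viewed in the plane. -/
def toPlane (q : ℤ × ℤ) : ℝ × ℝ := ((q.1 : ℝ), (q.2 : ℝ))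

lemma linear_le_of_mem_hull {V : Set (ℝ × ℝ)} {c d e : ℝ} (h : ∀ s ∈ V, c * s.1 + d * s.2 ≤ e)
    {z : ℝ × ℝ} (hz : z ∈ convexHull ℝ V) : c * z.1 + d * z.2 ≤ e := by
  have hlin : IsLinearMap ℝ (fun w : ℝ × ℝ => c * w.1 + d * w.2) :=
    ⟨fun a b => by simp; ring, fun a b => by simp; ring⟩
  exact convexHull_min (t := {w : ℝ × ℝ | c * w.1 + d * w.2 ≤ e}) (fun s hs => h s hs)
    (convex_halfSpace_le hlin e) hz

lemma mem_segment_horizontal_s6 {a b x : ℝ} (c : ℝ) (h1 : a ≤ x) (h2 : x ≤ b) :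
    (x, c) ∈ segment ℝ (a, c) (b, c) := by
  rw [← Prod.image_mk_segment_left, segment_eq_Icc (h1.trans h2)]
  exact ⟨x, ⟨h1, h2⟩, rfl⟩

lemma mem_segment_vertical_s6 {a b y : ℝ} (c : ℝ) (h1 : a ≤ y) (h2 : y ≤ b) :
    (c, y) ∈ segment ℝ (c, a) (c, b) := by
  rw [← Prod.image_mk_segment_right, segment_eq_Icc (h1.trans h2)]
  exact ⟨y, ⟨h1, h2⟩, rfl⟩

lemma mem_of_mem_box {K : Set (ℝ × ℝ)} (hK : Convex ℝ K) {x y x' y' : ℝ} (h0 : (0, 0) ∈ K)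
    (hx' : (x', 0) ∈ K) (hy' : (0, y') ∈ K) (hxy : (x', y') ∈ K)
    (hx0 : 0 ≤ x) (hx : x ≤ x') (hy0 : 0 ≤ y) (hy : y ≤ y') : (x, y) ∈ K :=
  hK.segment_subset (hK.segment_subset h0 hx' (mem_segment_horizontal_s6 0 hx0 hx))
    (hK.segment_subset hy' hxy (mem_segment_horizontal_s6 y' hx0 hx)) (mem_segment_vertical_s6 x hy0 hy)

lemma exists_first_step (Q : ℕ → Prop) (N : ℕ) (h0 : ¬ Q 0) (hN : Q N) :
    ∃ i < N, ¬ Q i ∧ Q (i + 1) := by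
  classical
  have hex : ∃ n, Q n := ⟨N, hN⟩
  have h1 : Nat.find hex ≠ 0 := fun h => h0 (h ▸ Nat.find_spec hex)
  obtain ⟨i, hi⟩ := Nat.exists_eq_succ_of_ne_zero h1
  have h2 : Nat.find hex ≤ N := Nat.find_min' hex hN
  exact ⟨i, by omega, Nat.find_min hex (by omega), by simpa [hi] using Nat.find_spec hex⟩

/-- A point weakly below the line through a descending edge, over the horizontal extent of the
edge, lies weakly below a point of the edge. -/
lemma exists_above {a b a' b' x y : ℝ} (h1 : a < x) (h2 : x ≤ a')
    (h : (b - b') * (x - a) + (a' - a) * (y - b) ≤ 0) :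
    ∃ g, y ≤ g ∧ (x, g) ∈ segment ℝ (a, b) (a', b') := by
  have hd : 0 < a' - a := by linarith
  refine ⟨b + (x - a) / (a' - a) * (b' - b), ?_, 1 - (x - a) / (a' - a), (x - a) / (a' - a),
    ?_, ?_, by ring, ?_⟩
  · have h3 : (x - a) / (a' - a) * (b' - b) = (x - a) * (b' - b) / (a' - a) := by ring
    have h4 : y - b ≤ (x - a) * (b' - b) / (a' - a) := by
      rw [le_div_iff₀ hd]; linarith
    linarith
  · rw [sub_nonneg, div_le_one hd]; linarith
  · exact div_nonneg (by linarith) hd.le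
  · ext
    · simp only [Prod.smul_mk, Prod.mk_add_mk, smul_eq_mul]
      field_simp
      ring
    · simp only [Prod.smul_mk, Prod.mk_add_mk, smul_eq_mul]
      ring

lemma exists_right {a b a' b' x y : ℝ} (h1 : b' < y) (h2 : y ≤ b)
    (h : (b - b') * (x - a) + (a' - a) * (y - b) ≤ 0) :
    ∃ g, x ≤ g ∧ (g, y) ∈ segment ℝ (a, b) (a', b') := by
  obtain ⟨g, hg, s, t, hs, ht, hst, he⟩ :=
    exists_above (a := b') (b := a') (a' := b) (b' := a) (x := y) (y := x) h1 h2 (by linarith)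
  refine ⟨g, hg, t, s, ht, hs, by linarith, ?_⟩
  simp only [Prod.smul_mk, Prod.mk_add_mk, smul_eq_mul, Prod.mk.injEq] at he ⊢
  exact ⟨by linarith, by linarith⟩

/-- A finite set of lattice points in the quadrant that contains the origin and the corners
`(A, 0)`, `(0, B)` of its bounding box is spanned by a convex integral path. The path is recorded
with its vertices as a sequence indexed by `ℕ`, together with strict convexity. -/
lemma exists_path_of_finset (S : Finset (ℤ × ℤ)) (A B : ℤ) (h0 : (0, 0) ∈ S) (hA : (A, 0) ∈ S)
    (hB : (0, B) ∈ S) (hnn : ∀ s ∈ S, 0 ≤ s.1 ∧ 0 ≤ s.2) (hx : ∀ s ∈ S, s.1 ≤ A)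
    (hy : ∀ s ∈ S, s.2 ≤ B) :
    ∃ (Λ : ConvexIntegralPath) (p : ℕ → ℤ × ℤ), (∀ i : Fin (Λ.N + 1), Λ.p i = p i) ∧
      Λ.region = convexHull ℝ (toPlane '' (S : Set (ℤ × ℤ))) ∧
      (∀ i ≤ Λ.N, p i ∈ S) ∧
      (∀ i < Λ.N, (p i).1 ≤ (p (i + 1)).1 ∧ (p (i + 1)).2 ≤ (p i).2) ∧
      ∀ i, i + 1 < Λ.N →
          ((p i).2 - (p (i + 1)).2) * ((p (i + 2)).1 - (p (i + 1)).1) <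
            ((p (i + 1)).1 - (p i).1) * ((p (i + 1)).2 - (p (i + 2)).2) := by
  obtain ⟨N, p, hp0, hpN, hpS, hpe, -, hpt⟩ := exists_hull_path_aux S A hA hx
    (fun s hs => (hnn s hs).2) (A + B).toNat (0, B) hB (-1) 1 one_pos
    (by intro s hs; have := hnn s hs; have := hy s hs; simp only; linarith)
    (fun s hs _ => hy s hs)
    (by
      intro s hs hne h1 h2
      simp only at h1 h2 ⊢
      have : ¬ (s.1 = 0 ∧ s.2 = B) := fun h => hne (Prod.ext h.1 h.2)
      omega)
    (by simp only; omega)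
  set V : ℕ → ℝ × ℝ := fun i => Nat.casesOn i (0, 0) (fun n => toPlane (p n)) with hV
  have hcv : ∀ i : Fin (N + 2), closedVerts (fun j : Fin (N + 1) => p j) i = V i := by
    intro i
    refine Fin.cases ?_ (fun j => ?_) i <;> simp [closedVerts, hV, toPlane]
  have hV0 : V 0 = (0, 0) := rfl
  have hV1 : V 1 = (0, (B : ℝ)) := by simp [hV, hp0, toPlane]
  have hVN : V (N + 1) = ((A : ℝ), 0) := by simp [hV, hpN, toPlane]
  -- The three kinds of edges of the closed polygon.
  have hedge : ∀ i : Fin (N + 2), (i.val = 0 ∧ (i + 1).val = 1) ∨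
      (∃ j < N, i.val = j + 1 ∧ (i + 1).val = j + 2) ∨ (i.val = N + 1 ∧ (i + 1).val = 0) := by
    intro i
    rw [Fin.val_add_one]
    have hi := i.isLt
    split_ifs with h
    · right; right
      exact ⟨by rw [h]; rfl, rfl⟩
    · have h' : i.val ≠ N + 1 := fun hc => h (Fin.ext hc)
      rcases Nat.eq_zero_or_pos i.val with h2 | h2
      · left; exact ⟨h2, by omega⟩
      · right; left
        exact ⟨i.val - 1, by omega, by omega, by omega⟩
  have hVmem : ∀ i ≤ N + 1, V i ∈ toPlane '' (S : Set (ℤ × ℤ)) := by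
    rintro (_ | i) hi
    · exact ⟨(0, 0), h0, by simp [toPlane, hV]⟩
    · exact ⟨p i, hpS i (by omega), rfl⟩
  set K := convexHull ℝ (Set.range (closedVerts (fun j : Fin (N + 1) => p j))) with hK
  have hKconv : Convex ℝ K := convex_convexHull ℝ _
  have hVK : ∀ i ≤ N + 1, V i ∈ K := fun i hi =>
    subset_convexHull ℝ _ ⟨⟨i, by omega⟩, hcv _⟩
  have hKsub : K ⊆ convexHull ℝ (toPlane '' (S : Set (ℤ × ℤ))) := by
    refine convexHull_mono ?_
    rintro _ ⟨i, rfl⟩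
    rw [hcv]
    exact hVmem _ (by omega)
  -- Every point of the hull of `S` satisfies the inequalities that define the polygon.
  have hineq : ∀ z ∈ convexHull ℝ (toPlane '' (S : Set (ℤ × ℤ))), 0 ≤ z.1 ∧ z.1 ≤ A ∧ 0 ≤ z.2 ∧
      z.2 ≤ B ∧ ∀ i < N, (((p i).2 : ℝ) - (p (i + 1)).2) * (z.1 - (p i).1) +
        (((p (i + 1)).1 : ℝ) - (p i).1) * (z.2 - (p i).2) ≤ 0 := by
    intro z hz
    have gen : ∀ c d e : ℝ, (∀ s ∈ S, c * (s.1 : ℝ) + d * (s.2 : ℝ) ≤ e) →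
        c * z.1 + d * z.2 ≤ e := by
      intro c d e h
      refine linear_le_of_mem_hull ?_ hz
      rintro _ ⟨s, hs, rfl⟩
      exact h s hs
    refine ⟨?_, ?_, ?_, ?_, fun i hi => ?_⟩
    · have := gen (-1) 0 0 (by
        intro s hs; have : (0 : ℝ) ≤ s.1 := by exact_mod_cast (hnn s hs).1
        linarith)
      linarith
    · have := gen 1 0 A (by
        intro s hs; have : (s.1 : ℝ) ≤ A := by exact_mod_cast hx s hs
        linarith)
      linarith
    · have := gen 0 (-1) 0 (by
        intro s hs; have : (0 : ℝ) ≤ s.2 := by exact_mod_cast (hnn s hs).2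
        linarith)
      linarith
    · have := gen 0 1 B (by
        intro s hs; have : (s.2 : ℝ) ≤ B := by exact_mod_cast hy s hs
        linarith)
      linarith
    · have := gen (((p i).2 : ℝ) - (p (i + 1)).2) (((p (i + 1)).1 : ℝ) - (p i).1)
        ((((p i).2 : ℝ) - (p (i + 1)).2) * (p i).1 + (((p (i + 1)).1 : ℝ) - (p i).1) * (p i).2) (by
        intro s hs
        have : (((p i).2 : ℝ) - (p (i + 1)).2) * (s.1 - (p i).1) +
          (((p (i + 1)).1 : ℝ) - (p i).1) * (s.2 - (p i).2) ≤ 0 := by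
            exact_mod_cast (hpe i hi).2.2.2 s hs
        linarith)
      linarith
  have hup : ∀ z ∈ convexHull ℝ (toPlane '' (S : Set (ℤ × ℤ))), 0 < z.1 →
      ∃ i < N, ∃ g, z.2 ≤ g ∧ (z.1, g) ∈ segment ℝ (V (i + 1)) (V (i + 2)) := by
    intro z hz hz0
    obtain ⟨-, hzA, -, -, hs⟩ := hineq z hz
    obtain ⟨i, hi, h1, h2⟩ := exists_first_step (fun i => z.1 ≤ (p i).1) N
      (by simp [hp0, hz0]) (by simpa [hpN] using hzA)
    exact ⟨i, hi, exists_above (not_le.1 h1) h2 (hs i hi)⟩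
  have hright : ∀ z ∈ convexHull ℝ (toPlane '' (S : Set (ℤ × ℤ))), 0 < z.2 →
      ∃ i < N, ∃ g, z.1 ≤ g ∧ (g, z.2) ∈ segment ℝ (V (i + 1)) (V (i + 2)) := by
    intro z hz hz0
    obtain ⟨-, -, -, hzB, hs⟩ := hineq z hz
    obtain ⟨i, hi, h1, h2⟩ := exists_first_step (fun i => ((p i).2 : ℝ) < z.2) N
      (by simpa [hp0] using hzB) (by simpa [hpN] using hz0)
    exact ⟨i, hi, exists_right h2 (not_lt.1 h1) (hs i hi)⟩
  have hsegK : ∀ i ≤ N, segment ℝ (V i) (V (i + 1)) ⊆ K := fun i hi =>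
    hKconv.segment_subset (hVK i (by omega)) (hVK (i + 1) (by omega))
  have h0K : ((0, 0) : ℝ × ℝ) ∈ K := hVK 0 (by omega)
  have hxK : ∀ x : ℝ, 0 ≤ x → x ≤ A → (x, (0 : ℝ)) ∈ K := fun x h1 h2 =>
    hKconv.segment_subset h0K (hVN ▸ hVK (N + 1) le_rfl) (mem_segment_horizontal_s6 0 h1 h2)
  have hyK : ∀ y : ℝ, 0 ≤ y → y ≤ B → ((0 : ℝ), y) ∈ K := fun y h1 h2 =>
    hKconv.segment_subset h0K (hV1 ▸ hVK 1 (by omega)) (mem_segment_vertical_s6 0 h1 h2)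
  have hdown : ∀ z ∈ K, ∀ x y : ℝ, 0 ≤ x → x ≤ z.1 → 0 ≤ y → y ≤ z.2 → (x, y) ∈ K := by
    intro z hz x y hx0 hxz hy0 hyz
    obtain ⟨h1, h2, h3, h4, -⟩ := hineq z (hKsub hz)
    exact mem_of_mem_box hKconv h0K (hxK _ h1 h2) (hyK _ h3 h4) hz hx0 hxz hy0 hyz
  have hKeq : K = convexHull ℝ (toPlane '' (S : Set (ℤ × ℤ))) := by
    refine Set.Subset.antisymm hKsub ?_
    intro z hz
    obtain ⟨h1, h2, h3, h4, -⟩ := hineq z hz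
    rcases h1.eq_or_lt with h | h
    · have := hyK _ h3 h4
      rwa [h] at this
    · obtain ⟨i, hi, g, hg, hseg⟩ := hup z hz h
      exact hdown _ (hsegK (i + 1) (by omega) hseg) _ _ h1 le_rfl h3 hg
  have hmono : ∀ i j, i ≤ j → j ≤ N → (j : ℤ) - i ≤ (p j).1 - (p j).2 - ((p i).1 - (p i).2) := by
    intro i j hij
    induction j, hij using Nat.le_induction with
    | base => intro _; simp
    | succ j hij ih =>
      intro hj
      have h1 := ih (by omega)
      obtain ⟨h2, h3, h4, -⟩ := hpe j (by omega)
      have h5 : ¬ ((p j).1 = (p (j + 1)).1 ∧ (p j).2 = (p (j + 1)).2) :=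
        fun h => h4 (Prod.ext h.1 h.2)
      push_cast
      omega
  let Λ : ConvexIntegralPath :=
    { N := N
      p := fun j => p j
      inj := by
        intro i j hij
        simp only at hij
        rcases le_total i j with h | h
        · have := hmono i j h (by omega)
          rw [hij] at this
          exact le_antisymm h (by rw [Fin.le_def]; omega)
        · have := hmono j i h (by omega)
          rw [hij] at this
          exact le_antisymm (by rw [Fin.le_def]; omega) h
      nonneg := fun i => hnn _ (hpS i (by omega))
      start_on_axis := by simp [hp0]
      end_on_axis := by simp [hpN]
      clockwise := by
        intro i j
        rw [hcv, hcv, hcv]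
        obtain ⟨h1, h2, h3, h4, h5⟩ := hineq (V j) (subset_convexHull ℝ _ (hVmem j (by omega)))
        rcases hedge i with ⟨e1, e2⟩ | ⟨l, hl, e1, e2⟩ | ⟨e1, e2⟩ <;> rw [e1, e2]
        · rw [hV0, hV1]
          have : 0 ≤ (B : ℝ) := h3.trans h4
          simp only [cross, Prod.fst_sub, Prod.snd_sub]
          nlinarith
        · have := h5 l hl
          change cross (toPlane (p (l + 1)) - toPlane (p l)) (V j - toPlane (p l)) ≤ 0
          simp only [cross, Prod.fst_sub, Prod.snd_sub, toPlane]
          linarith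
        · rw [hV0, hVN]
          have : 0 ≤ (A : ℝ) := h1.trans h2
          simp only [cross, Prod.fst_sub, Prod.snd_sub]
          nlinarith
      boundary := by
        intro z hz
        rw [← hK] at hz
        have hclosed : IsClosed K := (Set.finite_range _).isClosed_convexHull (𝕜 := ℝ)
        have hzK : z ∈ K := hclosed.frontier_subset hz
        have hzS := hKsub hzK
        have hsegU : ∀ i : Fin (N + 2), ∀ m n, i.val = m → (i + 1).val = n →
            z ∈ segment ℝ (V m) (V n) → z ∈ ⋃ i : Fin (N + 2),
              segment ℝ (closedVerts (fun j : Fin (N + 1) => p j) i)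
                (closedVerts (fun j : Fin (N + 1) => p j) (i + 1)) := by
          rintro i m n rfl rfl h
          refine Set.mem_iUnion.2 ⟨i, ?_⟩
          rwa [hcv, hcv]
        obtain ⟨h1, h2, h3, h4, -⟩ := hineq z hzS
        have hstep : ∀ l < N, z ∈ segment ℝ (V (l + 1)) (V (l + 2)) → _ := fun l hl =>
          hsegU ⟨l + 1, by omega⟩ (l + 1) (l + 2) rfl (by
            rcases hedge ⟨l + 1, by omega⟩ with ⟨e1, e2⟩ | ⟨l', hl', e1, e2⟩ | ⟨e1, e2⟩ <;>
              simp only at e1 <;> omega)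
        rcases h1.eq_or_lt with hz1 | hz1
        · refine hsegU 0 0 1 rfl ?_ ?_
          · rcases hedge 0 with ⟨e1, e2⟩ | ⟨l', hl', e1, e2⟩ | ⟨e1, e2⟩
            · exact e2
            · simp at e1
            · simp at e1
          · have := mem_segment_vertical_s6 0 h3 h4
            rw [hV0, hV1]
            rwa [hz1] at this ⊢
        rcases h3.eq_or_lt with hz2 | hz2
        · refine hsegU (Fin.last (N + 1)) (N + 1) 0 rfl ?_ ?_
          · simp
          · have := mem_segment_horizontal_s6 0 h1 h2
            rw [hV0, hVN, segment_symm]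
            rwa [hz2] at this ⊢
        obtain ⟨i, hi, g, hg, hseg⟩ := hup z hzS hz1
        obtain ⟨i', hi', g', hg', hseg'⟩ := hright z hzS hz2
        rcases hg.eq_or_lt with hgz | hgz
        · exact hstep i hi (by rwa [← hgz] at hseg)
        rcases hg'.eq_or_lt with hgz' | hgz'
        · exact hstep i' hi' (by rwa [← hgz'] at hseg')
        -- `z` is strictly dominated by a point of the polygon, so it is an interior point.
        exfalso
        have hmid : (((z.1 + g') / 2, (g + z.2) / 2) : ℝ × ℝ) ∈ K := by
          refine hKconv.segment_subset (hsegK (i + 1) (by omega) hseg)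
            (hsegK (i' + 1) (by omega) hseg') ⟨1 / 2, 1 / 2, by norm_num, by norm_num,
              by norm_num, ?_⟩
          simp only [Prod.smul_mk, Prod.mk_add_mk, smul_eq_mul]
          ext <;> ring
        have hsub : Set.Ioo 0 ((z.1 + g') / 2) ×ˢ Set.Ioo 0 ((g + z.2) / 2) ⊆ K := by
          rintro ⟨x, y⟩ ⟨hx', hy'⟩
          exact hdown _ hmid x y hx'.1.le hx'.2.le hy'.1.le hy'.2.le
        have hint : z ∈ interior K := by
          refine mem_interior.2 ⟨_, hsub, isOpen_Ioo.prod isOpen_Ioo, ⟨hz1, ?_⟩, hz2, ?_⟩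
          · linarith
          · linarith
        exact hz.2 hint }
  exact ⟨Λ, p, fun i => rfl, hKeq, hpS, fun i hi => ⟨(hpe i hi).1, (hpe i hi).2.1⟩, hpt⟩

/-! ### Convex lower sets of lattice points -/

/-- A finite set of lattice points in the quadrant that is a nonempty lower set and contains every
lattice point of its convex hull. -/
structure IsConvexLower (S : Finset (ℤ × ℤ)) : Prop where
  nonneg : ∀ s ∈ S, 0 ≤ s.1 ∧ 0 ≤ s.2
  zero_mem : (0, 0) ∈ S
  lower : ∀ s ∈ S, ∀ t : ℤ × ℤ, 0 ≤ t.1 → 0 ≤ t.2 → t.1 ≤ s.1 → t.2 ≤ s.2 → t ∈ S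
  convex : ∀ t, toPlane t ∈ convexHull ℝ (toPlane '' (S : Set (ℤ × ℤ))) → t ∈ S

/-- Removing the maximizer of `(x, y) ↦ √2 x + y` removes exactly one lattice point, because this
functional is injective on `ℤ²`; since it is increasing in both coordinates, the remaining set is
again a lower set. -/
lemma IsConvexLower.exists_erase {S : Finset (ℤ × ℤ)} (hS : IsConvexLower S) (hcard : 2 ≤ S.card) :
    ∃ s ∈ S, IsConvexLower (S.erase s) := by
  obtain ⟨s, hs, hmax⟩ := Finset.exists_max_image S
    (fun s => √2 * (s.1 : ℝ) + (s.2 : ℝ)) ⟨_, hS.zero_mem⟩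
  have hsqrt : (0 : ℝ) < √2 := by positivity
  have hinj : ∀ t : ℤ × ℤ, √2 * (t.1 : ℝ) + (t.2 : ℝ) = √2 * (s.1 : ℝ) + (s.2 : ℝ) → t = s := by
    intro t ht
    have h1 : √2 * ((t.1 - s.1 : ℤ) : ℝ) = ((s.2 - t.2 : ℤ) : ℝ) := by push_cast; linarith
    have h2 : t.1 - s.1 = 0 := by
      by_contra h
      exact (irrational_sqrt_two.mul_intCast h).ne_int _ h1
    rw [h2] at h1
    have h3 : s.2 - t.2 = 0 := by
      have : ((s.2 - t.2 : ℤ) : ℝ) = 0 := by rw [← h1]; simp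
      exact_mod_cast this
    exact Prod.ext (by omega) (by omega)
  have hlt : ∀ t ∈ S, t ≠ s → √2 * (t.1 : ℝ) + (t.2 : ℝ) < √2 * (s.1 : ℝ) + (s.2 : ℝ) :=
    fun t ht hne => lt_of_le_of_ne (hmax t ht) fun h => hne (hinj t h)
  have hlower : ∀ t ∈ S.erase s, ∀ r : ℤ × ℤ, 0 ≤ r.1 → 0 ≤ r.2 → r.1 ≤ t.1 → r.2 ≤ t.2 →
      r ∈ S.erase s := by
    intro t ht r h1 h2 h3 h4
    obtain ⟨hts, htS⟩ := Finset.mem_erase.1 ht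
    refine Finset.mem_erase.2 ⟨?_, hS.lower t htS r h1 h2 h3 h4⟩
    rintro rfl
    have h5 := hlt t htS hts
    have h6 : (r.1 : ℝ) ≤ t.1 := by exact_mod_cast h3
    have h7 : (r.2 : ℝ) ≤ t.2 := by exact_mod_cast h4
    nlinarith [mul_le_mul_of_nonneg_left h6 hsqrt.le]
  refine ⟨s, hs, fun t ht => hS.nonneg t (Finset.mem_of_mem_erase ht), ?_, hlower, ?_⟩
  · have hne : (S.erase s).Nonempty := by
      rw [← Finset.card_pos, Finset.card_erase_of_mem hs]; omega
    obtain ⟨t, ht⟩ := hne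
    have := hS.nonneg t (Finset.mem_of_mem_erase ht)
    exact hlower t ht (0, 0) le_rfl le_rfl this.1 this.2
  · intro t ht
    refine Finset.mem_erase.2 ⟨?_, hS.convex t ?_⟩
    · rintro rfl
      have hlin : IsLinearMap ℝ (fun w : ℝ × ℝ => √2 * w.1 + w.2) :=
        ⟨fun a b => by simp; ring, fun a b => by simp; ring⟩
      have := convexHull_min (t := {w : ℝ × ℝ | √2 * w.1 + w.2 < √2 * (t.1 : ℝ) + (t.2 : ℝ)}) (by
          rintro _ ⟨r, hr, rfl⟩
          obtain ⟨h1, h2⟩ := Finset.mem_erase.1 hr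
          exact hlt r h2 h1)
        (convex_halfSpace_lt hlin _) ht
      exact lt_irrefl (√2 * (t.1 : ℝ) + (t.2 : ℝ)) this
    · exact convexHull_mono (Set.image_mono (Finset.coe_subset.2 (Finset.erase_subset _ _))) ht

lemma IsConvexLower.exists_subset_card {S : Finset (ℤ × ℤ)} (hS : IsConvexLower S) (n : ℕ)
    (hn : 1 ≤ n) (hcard : n ≤ S.card) : ∃ T ⊆ S, IsConvexLower T ∧ T.card = n := by
  induction hm : S.card using Nat.strong_induction_on generalizing S with
  | _ m ih =>
    rcases hcard.eq_or_lt with h | h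
    · exact ⟨S, subset_rfl, hS, h.symm⟩
    · obtain ⟨s, hs, hS'⟩ := hS.exists_erase (by omega)
      have hc := Finset.card_erase_of_mem hs
      obtain ⟨T, hT, hT'⟩ := ih (S.erase s).card (by omega) hS' (by omega) rfl
      exact ⟨T, hT.trans (Finset.erase_subset _ _), hT'⟩

lemma IsConvexLower.le_card {S : Finset (ℤ × ℤ)} (hS : IsConvexLower S) :
    ∀ s ∈ S, s.1 ≤ S.card ∧ s.2 ≤ S.card := by
  intro s hs
  obtain ⟨h1, h2⟩ := hS.nonneg s hs
  constructor
  · have h : (Finset.Icc 0 s.1).card ≤ S.card :=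
      Finset.card_le_card_of_injOn (fun i => (i, 0)) (by
        intro i hi
        have hi := Finset.mem_Icc.1 hi
        exact hS.lower s hs _ hi.1 le_rfl hi.2 h2) (fun i _ j _ h => congrArg Prod.fst h)
    rw [Int.card_Icc] at h
    omega
  · have h : (Finset.Icc 0 s.2).card ≤ S.card :=
      Finset.card_le_card_of_injOn (fun i => (0, i)) (by
        intro i hi
        have hi := Finset.mem_Icc.1 hi
        exact hS.lower s hs _ le_rfl hi.1 h1 hi.2) (fun i _ j _ h => congrArg Prod.snd h)
    rw [Int.card_Icc] at h
    omega

lemma finite_isConvexLower_card (n : ℕ) :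
    {S : Finset (ℤ × ℤ) | IsConvexLower S ∧ S.card = n}.Finite := by
  refine (Finset.finite_toSet (Finset.Icc ((0 : ℤ), (0 : ℤ)) ((n : ℤ), (n : ℤ))).powerset).subset ?_
  rintro S ⟨hS, rfl⟩
  refine Finset.mem_coe.2 (Finset.mem_powerset.2 fun s hs => Finset.mem_Icc.2 ?_)
  exact ⟨hS.nonneg s hs, hS.le_card s hs⟩

/-- `s` is dominated by the path `Λ`: no functional with nonnegative coefficients is larger at `s`
than at all vertices of `Λ`. Equivalently, `s` lies in the lower closure of the region. -/
def Dominated (Λ : ConvexIntegralPath) (s : ℝ × ℝ) : Prop :=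
  ∀ c d : ℝ, 0 ≤ c → 0 ≤ d →
    ∃ i, c * s.1 + d * s.2 ≤ c * ((Λ.p i).1 : ℝ) + d * ((Λ.p i).2 : ℝ)

/-- Domination passes to convex hulls: a functional that is bounded by its largest value on the
vertices of `Λ` throughout `V` is so on the convex hull of `V`. -/
lemma Dominated.of_mem_hull {Λ : ConvexIntegralPath} {V : Set (ℝ × ℝ)}
    (h : ∀ s ∈ V, Dominated Λ s) {z : ℝ × ℝ} (hz : z ∈ convexHull ℝ V) : Dominated Λ z := by
  intro c d hc hd
  obtain ⟨i, -, hi⟩ := Finset.exists_max_image Finset.univ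
    (fun i => c * ((Λ.p i).1 : ℝ) + d * ((Λ.p i).2 : ℝ)) ⟨0, Finset.mem_univ _⟩
  refine ⟨i, linear_le_of_mem_hull ?_ hz⟩
  intro s hs
  obtain ⟨j, hj⟩ := h s hs c d hc hd
  exact hj.trans (hi j (Finset.mem_univ _))

lemma dominated_of_mem_region {Λ : ConvexIntegralPath} {z : ℝ × ℝ} (hz : z ∈ Λ.region) :
    Dominated Λ z := by
  refine Dominated.of_mem_hull ?_ hz
  rintro _ ⟨i, rfl⟩
  refine Fin.cases (fun c d hc hd => ⟨0, ?_⟩) (fun j c d hc hd => ⟨j, le_rfl⟩) i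
  have h1 : (0 : ℝ) ≤ (Λ.p 0).1 := by exact_mod_cast (Λ.nonneg 0).1
  have h2 : (0 : ℝ) ≤ (Λ.p 0).2 := by exact_mod_cast (Λ.nonneg 0).2
  simpa [closedVerts] using add_nonneg (mul_nonneg hc h1) (mul_nonneg hd h2)

lemma nonneg_of_mem_region {Λ : ConvexIntegralPath} {z : ℝ × ℝ} (hz : z ∈ Λ.region) :
    0 ≤ z.1 ∧ 0 ≤ z.2 := by
  have hvert : ∀ s ∈ Set.range (closedVerts Λ.p), 0 ≤ s.1 ∧ 0 ≤ s.2 := by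
    rintro _ ⟨i, rfl⟩
    refine Fin.cases (by simp [closedVerts]) (fun j => ?_) i
    simpa [closedVerts] using Λ.nonneg j
  have h1 := linear_le_of_mem_hull (c := -1) (d := 0) (e := 0)
    (fun s hs => by linarith [(hvert s hs).1]) hz
  have h2 := linear_le_of_mem_hull (c := 0) (d := -1) (e := 0)
    (fun s hs => by linarith [(hvert s hs).2]) hz
  constructor <;> linarith

/-- The dominated lattice points of the quadrant form a convex lower set that contains all lattice
points of the region. -/
lemma exists_dominated_set (Λ : ConvexIntegralPath) :
    ∃ S : Finset (ℤ × ℤ), IsConvexLower S ∧ Λ.latticePointCount ≤ S.card ∧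
      ∀ s ∈ S, Dominated Λ (toPlane s) := by
  set D : Set (ℤ × ℤ) := {s | 0 ≤ s.1 ∧ 0 ≤ s.2 ∧ Dominated Λ (toPlane s)} with hD
  have hfin : D.Finite := by
    refine (Set.finite_Icc ((0 : ℤ), (0 : ℤ)) (∑ i, (Λ.p i).1, ∑ i, (Λ.p i).2)).subset ?_
    rintro s ⟨h1, h2, h3⟩
    obtain ⟨i, hi⟩ := h3 1 0 zero_le_one le_rfl
    obtain ⟨j, hj⟩ := h3 0 1 le_rfl zero_le_one
    have hi' : s.1 ≤ (Λ.p i).1 := by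
      have : (s.1 : ℝ) ≤ (Λ.p i).1 := by simpa [toPlane] using hi
      exact_mod_cast this
    have hj' : s.2 ≤ (Λ.p j).2 := by
      have : (s.2 : ℝ) ≤ (Λ.p j).2 := by simpa [toPlane] using hj
      exact_mod_cast this
    refine ⟨⟨h1, h2⟩, hi'.trans ?_, hj'.trans ?_⟩
    · exact Finset.single_le_sum (f := fun i => (Λ.p i).1) (fun i _ => (Λ.nonneg i).1)
        (Finset.mem_univ i)
    · exact Finset.single_le_sum (f := fun i => (Λ.p i).2) (fun i _ => (Λ.nonneg i).2)
        (Finset.mem_univ j)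
  have hcoe : ((hfin.toFinset : Finset (ℤ × ℤ)) : Set (ℤ × ℤ)) = D := hfin.coe_toFinset
  have hmem : ∀ s, s ∈ hfin.toFinset ↔ s ∈ D := fun s => hfin.mem_toFinset
  have hreg : {q : ℤ × ℤ | (((q.1 : ℝ), (q.2 : ℝ)) : ℝ × ℝ) ∈ Λ.region} ⊆ D := by
    intro q hq
    obtain ⟨h1, h2⟩ := nonneg_of_mem_region hq
    simp only [Int.cast_nonneg_iff] at h1 h2
    exact ⟨h1, h2, dominated_of_mem_region hq⟩
  refine ⟨hfin.toFinset, ⟨?_, ?_, ?_, ?_⟩, ?_, fun s hs => ((hmem s).1 hs).2.2⟩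
  · intro s hs
    obtain ⟨h1, h2, -⟩ := (hmem s).1 hs
    exact ⟨h1, h2⟩
  · refine (hmem _).2 (hreg (subset_convexHull ℝ _ ⟨0, ?_⟩))
    simp [closedVerts]
  · intro s hs t h1 h2 h3 h4
    obtain ⟨-, -, h5⟩ := (hmem s).1 hs
    refine (hmem _).2 ⟨h1, h2, fun c d hc hd => ?_⟩
    obtain ⟨i, hi⟩ := h5 c d hc hd
    refine ⟨i, le_trans (add_le_add ?_ ?_) hi⟩
    · exact mul_le_mul_of_nonneg_left (by simpa [toPlane] using h3) hc
    · exact mul_le_mul_of_nonneg_left (by simpa [toPlane] using h4) hd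
  · intro t ht
    rw [hcoe] at ht
    refine (hmem _).2 ⟨?_, ?_, ?_⟩
    · have := linear_le_of_mem_hull (c := -1) (d := 0) (e := 0) (by
        rintro _ ⟨s, hs, rfl⟩
        have : (0 : ℝ) ≤ s.1 := by exact_mod_cast hs.1
        simpa [toPlane] using this) ht
      simpa [toPlane] using this
    · have := linear_le_of_mem_hull (c := 0) (d := -1) (e := 0) (by
        rintro _ ⟨s, hs, rfl⟩
        have : (0 : ℝ) ≤ s.2 := by exact_mod_cast hs.2.1
        simpa [toPlane] using this) ht
      simpa [toPlane] using this
    · refine Dominated.of_mem_hull ?_ ht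
      rintro _ ⟨s, hs, rfl⟩
      exact hs.2.2
  · rw [← Set.ncard_eq_toFinset_card D hfin]
    exact Set.ncard_le_ncard hreg hfin

/-! ### The minimum -/

/-- A convex lower set `S` is the set of lattice points of the region of a convex integral path
that is no longer than any path dominating `S`. -/
lemma IsConvexLower.exists_path {S : Finset (ℤ × ℤ)} (hS : IsConvexLower S)
    {Ω : Set (ℝ × ℝ)} (hcomp : IsCompact Ω)
    (hquad : Ω ⊆ {v : ℝ × ℝ | 0 ≤ v.1 ∧ 0 ≤ v.2}) (hne : Ω.Nonempty) :
    ∃ Λ : ConvexIntegralPath, Λ.latticePointCount = S.card ∧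
      ∀ Λ' : ConvexIntegralPath, (∀ s ∈ S, Dominated Λ' (toPlane s)) →
        pathLength Ω Λ ≤ pathLength Ω Λ' := by
  obtain ⟨s, hs, hsmax⟩ := Finset.exists_max_image S Prod.fst ⟨_, hS.zero_mem⟩
  obtain ⟨t, ht, htmax⟩ := Finset.exists_max_image S Prod.snd ⟨_, hS.zero_mem⟩
  obtain ⟨Λ, p, hΛp, hreg, hpS, hmono, hturn⟩ := exists_path_of_finset S s.1 t.2 hS.zero_mem
    (hS.lower s hs _ (hS.nonneg s hs).1 le_rfl le_rfl (hS.nonneg s hs).2)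
    (hS.lower t ht _ le_rfl (hS.nonneg t ht).2 (hS.nonneg t ht).1 le_rfl)
    hS.nonneg hsmax htmax
  refine ⟨Λ, ?_, fun Λ' hdom => ?_⟩
  · have : {q : ℤ × ℤ | (((q.1 : ℝ), (q.2 : ℝ)) : ℝ × ℝ) ∈ Λ.region} = (S : Set (ℤ × ℤ)) := by
      ext q
      rw [hreg]
      exact ⟨fun h => hS.convex q h, fun h => subset_convexHull ℝ _ ⟨q, h, rfl⟩⟩
    rw [ConvexIntegralPath.latticePointCount, this, Set.ncard_coe_finset]
  · -- The index is truncated so that the vertices of `Λ'` become a sequence indexed by `ℕ`.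
    have hp' : ∀ i, min i Λ'.N < Λ'.N + 1 := fun i => by omega
    have key := length_le_of_dominated hcomp hquad hne Λ.N Λ'.N
      (fun i => ((p i).1 : ℝ)) (fun i => ((p i).2 : ℝ))
      (fun i => ((Λ'.p ⟨min i Λ'.N, hp' i⟩).1 : ℝ)) (fun i => ((Λ'.p ⟨min i Λ'.N, hp' i⟩).2 : ℝ))
      (fun i hi => by exact_mod_cast (hmono i hi).1) (fun i hi => by exact_mod_cast (hmono i hi).2)
      (fun i hi => by exact_mod_cast hturn i hi)
      (by
        have h1 := hΛp 0
        have h2 := Λ.start_on_axis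
        rw [h1] at h2
        exact_mod_cast h2)
      (by
        have h1 := hΛp (Fin.last Λ.N)
        have h2 := Λ.end_on_axis
        rw [h1] at h2
        exact_mod_cast h2)
      (by
        have h1 : (⟨min 0 Λ'.N, hp' 0⟩ : Fin (Λ'.N + 1)) = 0 := Fin.ext (by simp)
        rw [h1]
        exact_mod_cast Λ'.start_on_axis)
      (by
        have h1 : (⟨min Λ'.N Λ'.N, hp' Λ'.N⟩ : Fin (Λ'.N + 1)) = Fin.last Λ'.N :=
          Fin.ext (by simp)
        rw [h1]
        exact_mod_cast Λ'.end_on_axis)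
      (by
        intro j hj c d hc hd
        obtain ⟨i, hi⟩ := hdom _ (hpS j hj) c d hc hd
        refine ⟨i, by omega, ?_⟩
        have h1 : (⟨min (i : ℕ) Λ'.N, hp' i⟩ : Fin (Λ'.N + 1)) = i :=
          Fin.ext (min_eq_left (by omega))
        rw [h1]
        exact hi)
    rw [Finset.sum_range, Finset.sum_range] at key
    convert key using 1
    · refine Finset.sum_congr rfl fun i _ => ?_
      rw [hΛp, hΛp]
      rfl
    · refine Finset.sum_congr rfl fun i _ => ?_
      have h1 : (⟨min (i : ℕ) Λ'.N, hp' i⟩ : Fin (Λ'.N + 1)) = i.castSucc :=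
        Fin.ext (min_eq_left (by omega))
      have h2 : (⟨min ((i : ℕ) + 1) Λ'.N, hp' (i + 1)⟩ : Fin (Λ'.N + 1)) = i.succ :=
        Fin.ext (min_eq_left (by omega))
      rw [h1, h2]

/-- The lattice points `(0, 0), …, (k, 0)` form a convex lower set. -/
lemma isConvexLower_row (k : ℕ) :
    ∃ S : Finset (ℤ × ℤ), IsConvexLower S ∧ S.card = k + 1 := by
  refine ⟨(Finset.Icc (0 : ℤ) k) ×ˢ {0}, ⟨?_, ?_, ?_, ?_⟩, by simp⟩
  · rintro ⟨a, b⟩ h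
    simp only [Finset.mem_product, Finset.mem_Icc, Finset.mem_singleton] at h
    simp only
    omega
  · simp
  · rintro ⟨a, b⟩ h ⟨c, d⟩ h1 h2 h3 h4
    simp only [Finset.mem_product, Finset.mem_Icc, Finset.mem_singleton] at h h1 h2 h3 h4 ⊢
    omega
  · rintro ⟨a, b⟩ h
    have gen : ∀ c d e : ℝ, (∀ i : ℤ, 0 ≤ i → i ≤ k → c * (i : ℝ) ≤ e) →
        c * (a : ℝ) + d * (b : ℝ) ≤ e := by
      intro c d e he
      refine linear_le_of_mem_hull ?_ h
      rintro _ ⟨⟨i, j⟩, hs, rfl⟩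
      simp only [Finset.mem_coe, Finset.mem_product, Finset.mem_Icc, Finset.mem_singleton] at hs
      simpa [toPlane, hs.2] using he i hs.1.1 hs.1.2
    have h1 := gen (-1) 0 0 (fun i hi _ => by
      have : (0 : ℝ) ≤ i := by exact_mod_cast hi
      linarith)
    have h2 := gen 1 0 k (fun i _ hi => by
      have : (i : ℝ) ≤ k := by exact_mod_cast hi
      linarith)
    have h3 := gen 0 1 0 (fun i _ _ => by simp)
    have h4 := gen 0 (-1) 0 (fun i _ _ => by simp)
    have e1 : (0 : ℝ) ≤ a := by linarith
    have e2 : (a : ℝ) ≤ k := by linarith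
    have e3 : (b : ℝ) = 0 := by linarith
    simp only [Finset.mem_product, Finset.mem_Icc, Finset.mem_singleton]
    exact ⟨⟨by exact_mod_cast e1, by exact_mod_cast e2⟩, by exact_mod_cast e3⟩

/-- Let `Ω ⊂ [0,∞)²` be compact with `Ω̂` convex, containing a point with both coordinates
positive.  Then for every `k ≥ 0`, the infimum of `ℓ_Ω(Λ)` over convex integral paths `Λ`
with `L̂(Λ) ≥ k + 1` and the infimum over those with `L̂(Λ) = k + 1` are both attained and
are equal. -/
theorem convex_toric_min_ge_eq_min_eq (Ω : Set (ℝ × ℝ)) (hcomp : IsCompact Ω)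
    (hquad : Ω ⊆ {v : ℝ × ℝ | 0 ≤ v.1 ∧ 0 ≤ v.2})
    (hconv : Convex ℝ (hatSet Ω))
    (hpos : ∃ w ∈ Ω, 0 < w.1 ∧ 0 < w.2) (k : ℕ) :
    ∃ c : ℝ,
      IsLeast {x : ℝ | ∃ Λ : ConvexIntegralPath, k + 1 ≤ Λ.latticePointCount ∧
        x = pathLength Ω Λ} c ∧
      IsLeast {x : ℝ | ∃ Λ : ConvexIntegralPath, Λ.latticePointCount = k + 1 ∧
        x = pathLength Ω Λ} c := by
  have hne : Ω.Nonempty := hpos.imp fun w hw => hw.1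
  choose Λ hcount hmin using
    fun S : {S : Finset (ℤ × ℤ) // IsConvexLower S ∧ S.card = k + 1} =>
      S.2.1.exists_path hcomp hquad hne
  have hfinite : Finite {S : Finset (ℤ × ℤ) // IsConvexLower S ∧ S.card = k + 1} :=
    (finite_isConvexLower_card (k + 1)).to_subtype
  obtain ⟨S, hS⟩ := isConvexLower_row k
  have : Nonempty {S : Finset (ℤ × ℤ) // IsConvexLower S ∧ S.card = k + 1} := ⟨⟨S, hS⟩⟩
  obtain ⟨S₀, hS₀⟩ := Finite.exists_min (fun S => pathLength Ω (Λ S))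
  have hcount₀ : (Λ S₀).latticePointCount = k + 1 := (hcount S₀).trans S₀.2.2
  have hlower : ∀ Λ' : ConvexIntegralPath, k + 1 ≤ Λ'.latticePointCount →
      pathLength Ω (Λ S₀) ≤ pathLength Ω Λ' := by
    intro Λ' hΛ'
    obtain ⟨D, hD, hcard, hdom⟩ := exists_dominated_set Λ'
    obtain ⟨T, hTD, hT, hTcard⟩ :=
      hD.exists_subset_card (k + 1) (Nat.le_add_left 1 k) (hΛ'.trans hcard)
    exact (hS₀ ⟨T, hT, hTcard⟩).trans (hmin ⟨T, hT, hTcard⟩ Λ' fun s hs => hdom s (hTD hs))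
  refine ⟨pathLength Ω (Λ S₀), ⟨⟨Λ S₀, hcount₀.ge, rfl⟩, ?_⟩, ⟨⟨Λ S₀, hcount₀, rfl⟩, ?_⟩⟩
  · rintro x ⟨Λ', hΛ', rfl⟩
    exact hlower Λ' hΛ'
  · rintro x ⟨Λ', hΛ', rfl⟩
    exact hlower Λ' hΛ'.ge
end
end

section
/- Let n ≥ 1, and let ω₀ denote the standard symplectic bilinear form on ℝ^{2n}, ω₀(v, w) = Σ_{i=1}^n (v_{2i−1} w_{2i} − v_{2i} w_{2i−1}). Let K ⊂ ℝ^{2n} be compact, let U ⊇ K be open, and let J : U → L(ℝ^{2n}, ℝ^{2n}) be a smooth (C^∞) map of continuous linear endomorphisms such that for every x ∈ U: J(x)² = −id, ω₀(J(x)v, J(x)w) = ω₀(v, w) for all v, w, and ω₀(v, J(x)v) > 0 for all v ≠ 0. Then there exists a smooth map J' : ℝ^{2n} → L(ℝ^{2n}, ℝ^{2n}) satisfying the same three pointwise conditions at every x ∈ ℝ^{2n} and agreeing with J on K. -/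
/-!
Fix a compatible complex structure `J₀` with metric `⟨v, w⟩ = ω(v, J₀ w)`. The Cayley transform
`J ↦ W = (J + J₀)⁻¹ (J - J₀)` identifies the compatible complex structures with the operators `W`
that anticommute with `J₀`, are symmetric for the metric, and are strict contractions
(`|W u| < |u|` for `u ≠ 0`); the inverse map is `W ↦ (1 - W) J₀ (1 - W)⁻¹`.
The set of such `W` is star-shaped about `0`, and both transforms are smooth. Hence the Cayley
transform of `J` can be multiplied by a smooth cutoff `χ` which is `1` on `K` and vanishes near the
complement of `U`, and transforming back gives the extension (equal to `J₀` where `χ = 0`).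

The two directions are `IsCompatible.isCayley_cayley` and `IsCayley.isCompatible`, and
`IsCompatible.cayleyInv_cayley` shows that the second transform inverts the first.
-/

open scoped BigOperators

/-- The standard symplectic bilinear form on `ℝ^{2n}`:
`ω₀(v, w) = ∑_{i=1}^n (v_{2i−1} w_{2i} − v_{2i} w_{2i−1})` (written with 0-based indices). -/
def omega0 (n : ℕ) (v w : EuclideanSpace ℝ (Fin (2 * n))) : ℝ :=
  ∑ i : Fin n,
    (v ⟨2 * (i : ℕ), by have := i.isLt; omega⟩ * w ⟨2 * (i : ℕ) + 1, by have := i.isLt; omega⟩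
     - v ⟨2 * (i : ℕ) + 1, by have := i.isLt; omega⟩ * w ⟨2 * (i : ℕ), by have := i.isLt; omega⟩)

open scoped Topology Manifold

/-! ### The Cayley transform of compatible complex structures -/

section Cayley

variable {E : Type*} [NormedAddCommGroup E] [NormedSpace ℝ E]

/-- `J` is a complex structure on `E` compatible with the bilinear form `ω`. -/
structure IsCompatible (ω : E →ₗ[ℝ] E →ₗ[ℝ] ℝ) (J : E →L[ℝ] E) : Prop where
  sq : J * J = -1
  symp : ∀ v w, ω (J v) (J w) = ω v w
  pos : ∀ v, v ≠ 0 → 0 < ω v (J v)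

/-- The image of the Cayley transform: operators anticommuting with `J₀` which are symmetric and
strictly contracting for the metric `ω(·, J₀ ·)`. -/
structure IsCayley (ω : E →ₗ[ℝ] E →ₗ[ℝ] ℝ) (J₀ W : E →L[ℝ] E) : Prop where
  anti : J₀ * W = -(W * J₀)
  symm : ∀ u v, ω u (J₀ (W v)) = ω (W u) (J₀ v)
  lt : ∀ u, u ≠ 0 → ω (W u) (J₀ (W u)) < ω u (J₀ u)

/-- The Cayley transform of `J` relative to `J₀`; it is meaningful when `J + J₀` is invertible. -/
noncomputable def cayley (J₀ J : E →L[ℝ] E) : E →L[ℝ] E := Ring.inverse (J + J₀) * (J - J₀)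

/-- The inverse Cayley transform; it is meaningful when `1 - W` is invertible. -/
noncomputable def cayleyInv (J₀ W : E →L[ℝ] E) : E →L[ℝ] E :=
  (1 - W) * J₀ * Ring.inverse (1 - W)

theorem isUnit_of_forall_ne_zero [FiniteDimensional ℝ E] (T : E →L[ℝ] E)
    (h : ∀ v, v ≠ 0 → T v ≠ 0) : IsUnit T := by
  rw [ContinuousLinearMap.isUnit_iff_isUnit_toLinearMap, LinearMap.isUnit_iff_ker_eq_bot,
    LinearMap.ker_eq_bot']
  intro v hv
  by_contra hne
  exact h v hne hv

variable {ω : E →ₗ[ℝ] E →ₗ[ℝ] ℝ} {J₀ J W : E →L[ℝ] E}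

theorem IsCompatible.apply_apply (h : IsCompatible ω J) (v : E) : J (J v) = -v := by
  simpa using congrArg (fun T : E →L[ℝ] E => T v) h.sq

/-- For a compatible `J` the form `ω(·, J ·)` is symmetric. -/
theorem IsCompatible.metric_symm (hω : ω.IsAlt) (h : IsCompatible ω J) (u v : E) :
    ω u (J v) = ω v (J u) := by
  rw [← h.symp u (J v), h.apply_apply, map_neg, hω.neg]

theorem IsCompatible.isUnit_add [FiniteDimensional ℝ E] (h : IsCompatible ω J)
    (h₀ : IsCompatible ω J₀) : IsUnit (J + J₀) := by
  refine isUnit_of_forall_ne_zero _ fun v hv h0 => ?_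
  have h1 := h.pos v hv
  have h2 := h₀.pos v hv
  have h3 : ω v ((J + J₀) v) = 0 := by rw [h0, map_zero]
  rw [add_apply, map_add] at h3
  linarith

theorem IsCompatible.add_mul_cayley [FiniteDimensional ℝ E] (h : IsCompatible ω J)
    (h₀ : IsCompatible ω J₀) : (J + J₀) * cayley J₀ J = J - J₀ := by
  rw [cayley, Ring.mul_inverse_cancel_left _ _ (h.isUnit_add h₀)]

theorem IsCompatible.add_mul_one_sub_cayley [FiniteDimensional ℝ E] (h : IsCompatible ω J)
    (h₀ : IsCompatible ω J₀) : (J + J₀) * (1 - cayley J₀ J) = J₀ + J₀ := by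
  rw [mul_sub, h.add_mul_cayley h₀, mul_one]
  abel

theorem IsCompatible.mul_one_sub_cayley [FiniteDimensional ℝ E] (h : IsCompatible ω J)
    (h₀ : IsCompatible ω J₀) : J * (1 - cayley J₀ J) = (1 - cayley J₀ J) * J₀ := by
  apply (h.isUnit_add h₀).mul_left_cancel
  have h1 : (J + J₀) * J = J₀ * (J + J₀) := by rw [add_mul, mul_add, h.sq, h₀.sq, add_comm]
  rw [← mul_assoc, h1, mul_assoc, ← mul_assoc (J + J₀) _ J₀, h.add_mul_one_sub_cayley h₀,
    mul_add, add_mul]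

theorem IsCompatible.mul_cayley [FiniteDimensional ℝ E] (h : IsCompatible ω J)
    (h₀ : IsCompatible ω J₀) : J₀ * cayley J₀ J = -(cayley J₀ J * J₀) := by
  apply (h.isUnit_add h₀).mul_left_cancel
  have h1 : (J + J₀) * J₀ = J * (J + J₀) := by rw [add_mul, mul_add, h.sq, h₀.sq, add_comm]
  rw [← mul_assoc, h1, mul_assoc, mul_neg, ← mul_assoc (J + J₀) _ J₀, h.add_mul_cayley h₀,
    mul_sub, sub_mul, h.sq, h₀.sq]
  abel

theorem IsCompatible.one_sub_cayley_apply_ne_zero [FiniteDimensional ℝ E]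
    (h : IsCompatible ω J) (h₀ : IsCompatible ω J₀) (v : E) (hv : v ≠ 0) :
    (1 - cayley J₀ J) v ≠ 0 := by
  intro h0
  have h1 := congrArg (fun T : E →L[ℝ] E => T v) (h.add_mul_one_sub_cayley h₀)
  simp only [mul_apply_eq_comp, h0, map_zero, add_apply] at h1
  have h2 : ω v (J₀ v + J₀ v) = 0 := by rw [← h1, map_zero]
  rw [map_add] at h2
  linarith [h₀.pos v hv]

/-- With `T = 1 - W`, the relation `J T = T J₀` turns the expression
`⟨T u, (1 + W) v⟩` into the metric of `J` at `(T u, T v)`. -/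
theorem IsCompatible.metric_one_sub_cayley [FiniteDimensional ℝ E] (h : IsCompatible ω J)
    (h₀ : IsCompatible ω J₀) (u v : E) :
    ω ((1 - cayley J₀ J) u) (J ((1 - cayley J₀ J) v)) =
      ω u (J₀ v) + ω u (J₀ (cayley J₀ J v)) - ω (cayley J₀ J u) (J₀ v)
        - ω (cayley J₀ J u) (J₀ (cayley J₀ J v)) := by
  have h1 := congrArg (fun T : E →L[ℝ] E => T v) (h.mul_one_sub_cayley h₀)
  have h2 := congrArg (fun T : E →L[ℝ] E => T v) (h.mul_cayley h₀)
  simp only [mul_apply_eq_comp, neg_apply] at h1 h2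
  rw [h1]
  simp only [sub_apply, one_apply_eq_self, map_sub,
    LinearMap.sub_apply, h2, map_neg]
  ring

theorem IsCompatible.isCayley_cayley [FiniteDimensional ℝ E] (hω : ω.IsAlt) (h : IsCompatible ω J)
    (h₀ : IsCompatible ω J₀) : IsCayley ω J₀ (cayley J₀ J) := by
  have hsymm : ∀ u v, ω u (J₀ (cayley J₀ J v)) = ω (cayley J₀ J u) (J₀ v) := by
    -- The antisymmetric part of the identity `metric_one_sub_cayley` is the symmetry of `W`.
    intro u v
    have h1 := h.metric_one_sub_cayley h₀ u v
    rw [h.metric_symm hω, h.metric_one_sub_cayley h₀ v u, h₀.metric_symm hω v u,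
      h₀.metric_symm hω v (cayley J₀ J u), h₀.metric_symm hω (cayley J₀ J v) u,
      h₀.metric_symm hω (cayley J₀ J v)] at h1
    linarith
  refine ⟨h.mul_cayley h₀, hsymm, fun u hu => ?_⟩
  have h1 := h.metric_one_sub_cayley h₀ u u
  have h2 := h.pos _ (h.one_sub_cayley_apply_ne_zero h₀ u hu)
  linarith [hsymm u u]

theorem IsCompatible.cayleyInv_cayley [FiniteDimensional ℝ E] (h : IsCompatible ω J)
    (h₀ : IsCompatible ω J₀) : cayleyInv J₀ (cayley J₀ J) = J := by
  rw [cayleyInv, ← h.mul_one_sub_cayley h₀, mul_assoc, Ring.mul_inverse_cancel _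
    (isUnit_of_forall_ne_zero _ (h.one_sub_cayley_apply_ne_zero h₀)), mul_one]

theorem IsCayley.isUnit_one_sub [FiniteDimensional ℝ E] (h : IsCayley ω J₀ W) :
    IsUnit (1 - W) := by
  refine isUnit_of_forall_ne_zero _ fun v hv h0 => ?_
  have h1 : W v = v := by
    rw [sub_apply, one_apply_eq_self, sub_eq_zero] at h0
    exact h0.symm
  have := h.lt v hv
  rw [h1] at this
  exact lt_irrefl _ this

theorem IsCayley.isCompatible [FiniteDimensional ℝ E] (hω : ω.IsAlt) (h₀ : IsCompatible ω J₀)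
    (h : IsCayley ω J₀ W) : IsCompatible ω (cayleyInv J₀ W) := by
  have hu := h.isUnit_one_sub
  have hJT : cayleyInv J₀ W * (1 - W) = (1 - W) * J₀ := by
    rw [cayleyInv, mul_assoc, Ring.inverse_mul_cancel _ hu, mul_one]
  have hsq : cayleyInv J₀ W * cayleyInv J₀ W = -1 := by
    apply hu.mul_right_cancel
    rw [mul_assoc, hJT, ← mul_assoc, hJT, mul_assoc, h₀.sq]
    simp
  have hsurj : ∀ v, ∃ u, (1 - W) u = v := fun v =>
    (ContinuousLinearMap.isUnit_iff_bijective.1 hu).2 v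
  have hmetric : ∀ u v, ω ((1 - W) u) (cayleyInv J₀ W ((1 - W) v)) =
      ω u (J₀ v) - ω (W u) (J₀ (W v)) := by
    intro u v
    have h1 := congrArg (fun T : E →L[ℝ] E => T v) hJT
    have h2 := congrArg (fun T : E →L[ℝ] E => T v) h.anti
    have h3 := h.symm u v
    simp only [mul_apply_eq_comp, neg_apply] at h1 h2
    rw [h2] at h3 ⊢
    rw [h1]
    simp only [sub_apply, one_apply_eq_self, map_sub,
      LinearMap.sub_apply, map_neg] at h3 ⊢
    linarith
  have hsymm : ∀ v w, ω v (cayleyInv J₀ W w) = ω w (cayleyInv J₀ W v) := by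
    intro v w
    obtain ⟨u, rfl⟩ := hsurj v
    obtain ⟨u', rfl⟩ := hsurj w
    rw [hmetric, hmetric, h₀.metric_symm hω, h₀.metric_symm hω (W u)]
  refine ⟨hsq, fun v w => ?_, fun v hv => ?_⟩
  · have h1 := congrArg (fun T : E →L[ℝ] E => T v) hsq
    simp only [mul_apply_eq_comp, neg_apply,
      one_apply_eq_self] at h1
    rw [hsymm, h1, map_neg, hω.neg]
  · obtain ⟨u, rfl⟩ := hsurj v
    rw [hmetric]
    have hu0 : u ≠ 0 := by
      rintro rfl
      simp at hv
    linarith [h.lt u hu0]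

theorem IsCayley.smul (h₀ : IsCompatible ω J₀) (h : IsCayley ω J₀ W) {t : ℝ}
    (ht : t ∈ Set.Icc (0 : ℝ) 1) : IsCayley ω J₀ (t • W) := by
  refine ⟨?_, fun u v => ?_, fun u hu => ?_⟩
  · rw [mul_smul_comm, smul_mul_assoc, h.anti, smul_neg]
  · simp [h.symm u v]
  · have h1 := h.lt u hu
    have h2 : 0 ≤ ω (W u) (J₀ (W u)) := by
      by_cases h0 : W u = 0
      · simp [h0]
      · exact (h₀.pos _ h0).le
    simp only [smul_apply, map_smul, LinearMap.smul_apply, smul_eq_mul]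
    have h3 : t * t ≤ 1 := mul_le_one₀ ht.2 ht.1 ht.2
    nlinarith

theorem IsCayley.zero (h₀ : IsCompatible ω J₀) : IsCayley ω J₀ (0 : E →L[ℝ] E) :=
  ⟨by simp, by simp, fun u hu => by simpa using h₀.pos u hu⟩

theorem contDiffAt_ringInverse_comp [CompleteSpace E] {F : Type*} [NormedAddCommGroup F]
    [NormedSpace ℝ F] {f : F → E →L[ℝ] E} {x : F} (hf : ContDiffAt ℝ (⊤ : ℕ∞) f x)
    (hu : IsUnit (f x)) : ContDiffAt ℝ (⊤ : ℕ∞) (fun y => Ring.inverse (f y)) x := by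
  obtain ⟨u, hu⟩ := hu
  have h1 : ContDiffAt ℝ (⊤ : ℕ∞) (Ring.inverse : (E →L[ℝ] E) → _) (f x) :=
    hu ▸ contDiffAt_ringInverse ℝ u
  exact h1.comp x hf

/-- Extension for an arbitrary alternating form on a finite-dimensional space that admits some
compatible complex structure `J₀`. -/
theorem exists_extension [FiniteDimensional ℝ E] (hω : ω.IsAlt) (h₀ : IsCompatible ω J₀)
    {K U : Set E} (hK : IsClosed K) (hU : IsOpen U) (hKU : K ⊆ U) {J : E → E →L[ℝ] E}
    (hJ : ContDiffOn ℝ (⊤ : ℕ∞) J U) (hc : ∀ x ∈ U, IsCompatible ω (J x)) :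
    ∃ J' : E → E →L[ℝ] E, ContDiff ℝ (⊤ : ℕ∞) J' ∧ (∀ x, IsCompatible ω (J' x)) ∧
      ∀ x ∈ K, J' x = J x := by
  have : CompleteSpace E := FiniteDimensional.complete ℝ E
  obtain ⟨χ, hχ0, hχ1, hχ⟩ := exists_contMDiffMap_zero_one_nhds_of_isClosed (n := (⊤ : ℕ∞))
    𝓘(ℝ, E) hU.isClosed_compl hK (Set.disjoint_left.2 fun x hx hxK => hx (hKU hxK))
  have hχs : ContDiff ℝ (⊤ : ℕ∞) χ := χ.contMDiff.contDiff
  -- Off `U` the Cayley transform of `J x` is a junk value, but there `χ x = 0`.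
  have hW : ∀ x, IsCayley ω J₀ (χ x • cayley J₀ (J x)) := by
    intro x
    by_cases hx : x ∈ U
    · exact ((hc x hx).isCayley_cayley hω h₀).smul h₀ (hχ x)
    · rw [hχ0.self_of_nhdsSet x hx, zero_smul]
      exact IsCayley.zero h₀
  have hWs : ContDiff ℝ (⊤ : ℕ∞) fun x => χ x • cayley J₀ (J x) := by
    rw [contDiff_iff_contDiffAt]
    intro x
    by_cases hx : x ∈ U
    · have hJx : ContDiffAt ℝ (⊤ : ℕ∞) J x := hJ.contDiffAt (hU.mem_nhds hx)
      exact hχs.contDiffAt.smul ((contDiffAt_ringInverse_comp (hJx.add contDiffAt_const)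
        ((hc x hx).isUnit_add h₀)).mul (hJx.sub contDiffAt_const))
    · have h1 : ∀ᶠ y in 𝓝 x, χ y = 0 := eventually_nhdsSet_iff_forall.1 hχ0 x hx
      refine (contDiffAt_const (c := (0 : E →L[ℝ] E))).congr_of_eventuallyEq ?_
      filter_upwards [h1] with y hy
      rw [hy, zero_smul]
  refine ⟨fun x => cayleyInv J₀ (χ x • cayley J₀ (J x)), ?_,
    fun x => (hW x).isCompatible hω h₀, fun x hx => ?_⟩
  · rw [contDiff_iff_contDiffAt]
    intro x
    have h1 : ContDiffAt ℝ (⊤ : ℕ∞) (fun x => 1 - χ x • cayley J₀ (J x)) x :=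
      contDiffAt_const.sub hWs.contDiffAt
    exact (h1.mul contDiffAt_const).mul
      (contDiffAt_ringInverse_comp h1 (hW x).isUnit_one_sub)
  · simp only [hχ1.self_of_nhdsSet x hx, one_smul]
    exact (hc x (hKU hx)).cayleyInv_cayley h₀

end Cayley

/-! ### The standard symplectic form and complex structure -/

section Standard

/-- `omega0` as a bilinear map. -/
noncomputable def omega0Lin (n : ℕ) :
    EuclideanSpace ℝ (Fin (2 * n)) →ₗ[ℝ] EuclideanSpace ℝ (Fin (2 * n)) →ₗ[ℝ] ℝ :=
  LinearMap.mk₂ ℝ (omega0 n)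
    (fun u v w => by
      simp only [omega0, PiLp.add_apply, ← Finset.sum_add_distrib]
      exact Finset.sum_congr rfl fun i _ => by ring)
    (fun c v w => by
      simp only [omega0, PiLp.smul_apply, smul_eq_mul, Finset.mul_sum]
      exact Finset.sum_congr rfl fun i _ => by ring)
    (fun u v w => by
      simp only [omega0, PiLp.add_apply, ← Finset.sum_add_distrib]
      exact Finset.sum_congr rfl fun i _ => by ring)
    (fun c v w => by
      simp only [omega0, PiLp.smul_apply, smul_eq_mul, Finset.mul_sum]
      exact Finset.sum_congr rfl fun i _ => by ring)

theorem omega0Lin_isAlt (n : ℕ) : (omega0Lin n).IsAlt := fun v => by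
  change omega0 n v v = 0
  exact Finset.sum_eq_zero fun i _ => by ring

/-- The standard complex structure in coordinates, with the parity of the index deciding the case. -/
def stdJFun (n : ℕ) (v : Fin (2 * n) → ℝ) (k : Fin (2 * n)) : ℝ :=
  if h : (k : ℕ) % 2 = 0 then -v ⟨(k : ℕ) + 1, by have := k.isLt; omega⟩
  else v ⟨(k : ℕ) - 1, by have := k.isLt; omega⟩

/-- The standard complex structure: with 0-based indices,
`(J₀ v)_{2i} = -v_{2i+1}` and `(J₀ v)_{2i+1} = v_{2i}`. -/
noncomputable def stdJ (n : ℕ) :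
    EuclideanSpace ℝ (Fin (2 * n)) →L[ℝ] EuclideanSpace ℝ (Fin (2 * n)) :=
  LinearMap.toContinuousLinearMap
    { toFun := fun v => WithLp.toLp 2 (stdJFun n v.ofLp)
      map_add' := fun v w => by
        ext k
        simp only [PiLp.add_apply, stdJFun]
        split_ifs <;> ring
      map_smul' := fun c v => by
        ext k
        simp only [PiLp.smul_apply, stdJFun, smul_eq_mul,
          RingHom.id_apply]
        split_ifs <;> ring }

theorem stdJ_even (n : ℕ) (v : EuclideanSpace ℝ (Fin (2 * n))) (i : ℕ) (hi : 2 * i < 2 * n) :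
    stdJ n v ⟨2 * i, hi⟩ = -v ⟨2 * i + 1, by omega⟩ := by
  simp [stdJ, stdJFun]

theorem stdJ_odd (n : ℕ) (v : EuclideanSpace ℝ (Fin (2 * n))) (i : ℕ) (hi : 2 * i + 1 < 2 * n) :
    stdJ n v ⟨2 * i + 1, hi⟩ = v ⟨2 * i, by omega⟩ := by
  simp [stdJ, stdJFun, Nat.add_mod]

theorem exists_eq_even_or_odd {n : ℕ} (k : Fin (2 * n)) :
    ∃ i : Fin n, k = ⟨2 * (i : ℕ), by have := i.isLt; omega⟩ ∨
      k = ⟨2 * (i : ℕ) + 1, by have := i.isLt; omega⟩ := by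
  refine ⟨⟨k / 2, by have := k.isLt; omega⟩, ?_⟩
  simp only [Fin.ext_iff]
  omega

theorem isCompatible_stdJ (n : ℕ) : IsCompatible (omega0Lin n) (stdJ n) := by
  refine ⟨?_, fun v w => ?_, fun v hv => ?_⟩
  · ext v k
    obtain ⟨i, rfl | rfl⟩ := exists_eq_even_or_odd k
    · simp [stdJ_even, stdJ_odd]
    · simp [stdJ_even, stdJ_odd]
  · change omega0 n (stdJ n v) (stdJ n w) = omega0 n v w
    refine Finset.sum_congr rfl fun i _ => ?_
    simp only [stdJ_even, stdJ_odd]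
    ring
  · change 0 < omega0 n v (stdJ n v)
    have hnn : ∀ i : Fin n, 0 ≤ v ⟨2 * (i : ℕ), by have := i.isLt; omega⟩ ^ 2 +
        v ⟨2 * (i : ℕ) + 1, by have := i.isLt; omega⟩ ^ 2 := fun i => by positivity
    have heq : omega0 n v (stdJ n v) = ∑ i : Fin n,
        (v ⟨2 * (i : ℕ), by have := i.isLt; omega⟩ ^ 2 +
          v ⟨2 * (i : ℕ) + 1, by have := i.isLt; omega⟩ ^ 2) := by
      refine Finset.sum_congr rfl fun i _ => ?_
      simp only [stdJ_even, stdJ_odd]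
      ring
    rw [heq]
    refine lt_of_le_of_ne (Finset.sum_nonneg fun i _ => hnn i) fun h0 => hv ?_
    rw [eq_comm, Finset.sum_eq_zero_iff_of_nonneg fun i _ => hnn i] at h0
    ext k
    obtain ⟨i, rfl | rfl⟩ := exists_eq_even_or_odd k <;>
    · have h1 := h0 i (Finset.mem_univ i)
      simp only [PiLp.zero_apply]
      nlinarith

end Standard

/-- Any smooth `ω₀`-compatible almost complex structure `J` defined on an open neighborhood
`U` of a compact set `K ⊆ ℝ^{2n}` extends to a smooth `ω₀`-compatible almost complex structure
`J'` on all of `ℝ^{2n}` agreeing with `J` on `K`. -/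
theorem extend_compatible_acs (n : ℕ) (hn : 1 ≤ n)
    (K U : Set (EuclideanSpace ℝ (Fin (2 * n))))
    (hK : IsCompact K) (hU : IsOpen U) (hKU : K ⊆ U)
    (J : EuclideanSpace ℝ (Fin (2 * n)) →
      (EuclideanSpace ℝ (Fin (2 * n)) →L[ℝ] EuclideanSpace ℝ (Fin (2 * n))))
    (hsmooth : ContDiffOn ℝ (⊤ : ℕ∞) J U)
    (hsq : ∀ x ∈ U, ∀ v, J x (J x v) = -v)
    (hcompat : ∀ x ∈ U, ∀ v w, omega0 n (J x v) (J x w) = omega0 n v w)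
    (hpos : ∀ x ∈ U, ∀ v, v ≠ 0 → 0 < omega0 n v (J x v)) :
    ∃ J' : EuclideanSpace ℝ (Fin (2 * n)) →
        (EuclideanSpace ℝ (Fin (2 * n)) →L[ℝ] EuclideanSpace ℝ (Fin (2 * n))),
      ContDiff ℝ (⊤ : ℕ∞) J' ∧
      (∀ x, ∀ v, J' x (J' x v) = -v) ∧
      (∀ x, ∀ v w, omega0 n (J' x v) (J' x w) = omega0 n v w) ∧
      (∀ x, ∀ v, v ≠ 0 → 0 < omega0 n v (J' x v)) ∧
      (∀ x ∈ K, J' x = J x) := by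
  obtain ⟨J', hs, hc, hK'⟩ := exists_extension (omega0Lin_isAlt n) (isCompatible_stdJ n)
    hK.isClosed hU hKU hsmooth
    fun x hx => ⟨by ext1 v; simpa using hsq x hx v, hcompat x hx, hpos x hx⟩
  exact ⟨J', hs, fun x => (hc x).apply_apply, fun x => (hc x).symp, fun x => (hc x).pos, hK'⟩
end

section
/- Let B⁴(a) = {z ∈ ℂ² : π|z|² ≤ a} with the standard symplectic form ω₀ on ℂ² = ℝ⁴. There exist three smooth injective maps f₁, f₂, f₃ from the interior of B⁴(1/2) into the interior of B⁴(1), with pairwise disjoint images, such that each fᵢ is symplectic, i.e. for every point x and all tangent vectors v, w one has ω₀(Dfᵢ(x)v, Dfᵢ(x)w) = ω₀(v, w). -/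
/-!
The first ball is included in the unit-capacity ball. The second is placed in
`{π|z₁|² > 1/2, π|z|² < 1}` and the third is obtained from the second by exchanging the two complex
coordinates, so that it has `π|z₂|² > 1/2`; the three images are then disjoint.

The second embedding `Shell.F` works slice by slice. Over a fixed `z₂`, the slice of
`int B⁴(1/2)` is an open disc in the `z₁`-plane of squared radius `R² = 1/(2π) - |z₂|²`, and
`(x, p) ↦ (X, Y)`, with `X` the area to the left of `x` and
`Y = p / (2√(R² - x²))`, maps it in an area-preserving way into the rectangle
`(0, πR²) × (-1/2, 1/2)`. Taking `1/2 + X` as the area and `2πY` as the angle in polar coordinates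
lands in the annulus `1/2 < π|z₁|² < 1/2 + πR² = 1 - π|z₂|²`, as required. Since the slice map
depends on `z₂`, and only through `|z₂|²`, the symplectic form is restored by rotating `z₂` by a
suitable angle. It is found from the generating function `X(x, R²) · Y`: its derivative in the
slice area `πR²` is `TY/π` with `T = arcsin (x/R) + π/2`, which gives the rotation angle
`T p / √(R² - x²)`.

`Shell.F_symplectic` is the resulting computation, `Shell.F_mem` and `Shell.F_outer` locate the
image, and `Shell.F_injOn` recovers first `|z₂|`, then `x` (because `X` increases with `x`), then
`p` and `z₂` from the image point.
-/

open Real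

/-- The standard symplectic bilinear form on `ℂ² = ℝ⁴`:
`ω₀(v, w) = v₁w₂ − v₂w₁ + v₃w₄ − v₄w₃`. -/
def omega4 (v w : EuclideanSpace ℝ (Fin 4)) : ℝ :=
  v 0 * w 1 - v 1 * w 0 + v 2 * w 3 - v 3 * w 2

/-- The closed ball `B⁴(a) = {z ∈ ℂ² : π|z|² ≤ a}`, viewed in `ℝ⁴`. -/
def B4 (a : ℝ) : Set (EuclideanSpace ℝ (Fin 4)) :=
  {x | π * ‖x‖ ^ 2 ≤ a}

/-! ### The interior of the ball -/

theorem mem_interior_B4 {a : ℝ} (ha : 0 < a) (x : EuclideanSpace ℝ (Fin 4)) :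
    x ∈ interior (B4 a) ↔ π * (x 0 ^ 2 + x 1 ^ 2 + x 2 ^ 2 + x 3 ^ 2) < a := by
  have hnn : 0 ≤ a / π := by positivity
  have hB : B4 a = Metric.closedBall (0 : EuclideanSpace ℝ (Fin 4)) (√(a / π)) := by
    ext y
    rw [mem_closedBall_zero_iff, Real.le_sqrt (norm_nonneg _) hnn, le_div_iff₀ pi_pos, mul_comm]
    rfl
  have hne : √(a / π) ≠ 0 := (Real.sqrt_pos.2 (by positivity)).ne'
  have hn : ‖x‖ ^ 2 = x 0 ^ 2 + x 1 ^ 2 + x 2 ^ 2 + x 3 ^ 2 := by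
    rw [EuclideanSpace.norm_sq_eq, Fin.sum_univ_four]
    simp
  rw [hB, interior_closedBall _ hne, mem_ball_zero_iff, Real.lt_sqrt (norm_nonneg _),
    lt_div_iff₀ pi_pos, mul_comm, hn]

/-! ### The embedding of a ball into the shell -/

namespace Shell

/-- Squared half-length of the vertical chord, at abscissa `x₁ = Re z₁`, of the disc of squared radius
`1/(2π) - |z₂|²` in the `z₁`-plane. -/
noncomputable def W (x : EuclideanSpace ℝ (Fin 4)) : ℝ :=
  1 / (2 * π) - x 0 ^ 2 - x 2 ^ 2 - x 3 ^ 2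

/-- Half-length of the vertical chord through `z₁` in the disc of squared radius
`1/(2π) - |z₂|²`. -/
noncomputable def Q (x : EuclideanSpace ℝ (Fin 4)) : ℝ := √(W x)

/-- Squared radius of the slice of the ball over `z₂`. -/
noncomputable def R2 (x : EuclideanSpace ℝ (Fin 4)) : ℝ :=
  1 / (2 * π) - x 2 ^ 2 - x 3 ^ 2

/-- `T` is `arcsin (x₁ / R) + π / 2`, where `R² = R2`. The arctangent form avoids dividing by
`R`. -/
noncomputable def T (x : EuclideanSpace ℝ (Fin 4)) : ℝ := arctan (x 0 / Q x) + π / 2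

/-- Position of `z₁` on its vertical chord, scaled to lie in `(-1, 1)`. -/
noncomputable def M (x : EuclideanSpace ℝ (Fin 4)) : ℝ := x 1 / Q x

/-- Area of the part of the slice over `z₂` that lies to the left of `z₁`. -/
noncomputable def X (x : EuclideanSpace ℝ (Fin 4)) : ℝ := x 0 * Q x + R2 x * T x

/-- The squared modulus of the first complex coordinate of the image: the area it encloses is
`1/2 + X`. -/
noncomputable def G (x : EuclideanSpace ℝ (Fin 4)) : ℝ := 1 / (2 * π) + X x / π

/-- The symplectic embedding
`(z₁, z₂) ↦ (√G · exp (iπM), exp (iTM) · z₂)` of the ball into the part `π|z₁|² > 1/2` of the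
unit-capacity ball. -/
noncomputable def F (x : EuclideanSpace ℝ (Fin 4)) : EuclideanSpace ℝ (Fin 4) :=
  !₂[√(G x) * cos (π * M x), √(G x) * sin (π * M x),
    x 2 * cos (T x * M x) - x 3 * sin (T x * M x),
    x 2 * sin (T x * M x) + x 3 * cos (T x * M x)]

section Estimates

variable {x : EuclideanSpace ℝ (Fin 4)}

theorem sq_lt (hx : x ∈ interior (B4 (1 / 2))) : x 1 ^ 2 < W x := by
  rw [mem_interior_B4 (by norm_num)] at hx
  have h : x 0 ^ 2 + x 1 ^ 2 + x 2 ^ 2 + x 3 ^ 2 < 1 / (2 * π) := by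
    rw [lt_div_iff₀ (by positivity)]
    linarith
  unfold W
  linarith

theorem W_pos (hx : x ∈ interior (B4 (1 / 2))) : 0 < W x :=
  (sq_nonneg _).trans_lt (sq_lt hx)

theorem Q_pos (hx : x ∈ interior (B4 (1 / 2))) : 0 < Q x := Real.sqrt_pos.2 (W_pos hx)

theorem Q_sq (hx : x ∈ interior (B4 (1 / 2))) : Q x ^ 2 = W x := Real.sq_sqrt (W_pos hx).le

theorem R2_eq (hx : x ∈ interior (B4 (1 / 2))) : R2 x = x 0 ^ 2 + Q x ^ 2 := by
  rw [Q_sq hx]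
  unfold R2 W
  ring

theorem R2_pos (hx : x ∈ interior (B4 (1 / 2))) : 0 < R2 x := by
  rw [R2_eq hx]
  have := Q_pos hx
  positivity

theorem abs_M_lt (hx : x ∈ interior (B4 (1 / 2))) : |M x| < 1 := by
  have hq := Q_pos hx
  rw [M, abs_div, abs_of_pos hq, div_lt_one hq]
  exact abs_lt_of_sq_lt_sq (by rw [Q_sq hx]; exact sq_lt hx) hq.le

/-- The area to the left of the abscissa `t/√(1+t²)` in the unit disc, up to the constant
`π / 2`. -/
noncomputable def φ (t : ℝ) : ℝ := t / (1 + t ^ 2) + arctan t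

theorem φ_strictMono : StrictMono φ := by
  refine strictMono_of_deriv_pos fun t => ?_
  have h0 : (1 + t ^ 2) ≠ 0 := by positivity
  have h : HasDerivAt φ ((1 * (1 + t ^ 2) - t * (2 * t)) / (1 + t ^ 2) ^ 2 + 1 / (1 + t ^ 2)) t := by
    refine HasDerivAt.add (HasDerivAt.div (hasDerivAt_id' t) ?_ h0) (hasDerivAt_arctan t)
    simpa using (hasDerivAt_pow 2 t).const_add 1
  rw [h.deriv, show (1 * (1 + t ^ 2) - t * (2 * t)) / (1 + t ^ 2) ^ 2 + 1 / (1 + t ^ 2)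
    = 2 / (1 + t ^ 2) ^ 2 by field_simp; ring]
  positivity

theorem φ_eq (t : ℝ) : φ t = arctan t + sin (2 * arctan t) / 2 := by
  have hs : √(1 + t ^ 2) * √(1 + t ^ 2) = 1 + t ^ 2 := Real.mul_self_sqrt (by positivity)
  have h : sin (2 * arctan t) = 2 * (t / (1 + t ^ 2)) := by
    rw [sin_two_mul, sin_arctan, cos_arctan, mul_assoc, div_mul_div_comm, mul_one, hs]
  rw [h, φ]
  ring

theorem φ_lt (t : ℝ) : φ t < π / 2 := by
  have h1 := arctan_lt_pi_div_two t
  have h2 := sin_lt (x := π - 2 * arctan t) (by linarith)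
  rw [sin_pi_sub] at h2
  rw [φ_eq]
  linarith

theorem lt_φ (t : ℝ) : -(π / 2) < φ t := by
  have h1 := neg_pi_div_two_lt_arctan t
  have h2 := sin_lt (x := 2 * arctan t + π) (by linarith)
  rw [sin_add_pi] at h2
  rw [φ_eq]
  linarith

theorem X_eq (hx : x ∈ interior (B4 (1 / 2))) : X x = R2 x * (φ (x 0 / Q x) + π / 2) := by
  have hq := (Q_pos hx).ne'
  have hR := (R2_pos hx).ne'
  have h1 : 1 + (x 0 / Q x) ^ 2 = R2 x / Q x ^ 2 := by
    rw [R2_eq hx]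
    field_simp
    ring
  rw [X, T, φ, h1]
  field_simp
  ring

theorem X_pos (hx : x ∈ interior (B4 (1 / 2))) : 0 < X x := by
  rw [X_eq hx]
  exact mul_pos (R2_pos hx) (by linarith [lt_φ (x 0 / Q x)])

theorem X_lt (hx : x ∈ interior (B4 (1 / 2))) : X x < π * R2 x := by
  rw [X_eq hx, mul_comm π]
  exact mul_lt_mul_of_pos_left (by linarith [φ_lt (x 0 / Q x)]) (R2_pos hx)

theorem G_gt (hx : x ∈ interior (B4 (1 / 2))) : 1 / (2 * π) < G x := by
  have := div_pos (X_pos hx) pi_pos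
  unfold G
  linarith

theorem G_pos (hx : x ∈ interior (B4 (1 / 2))) : 0 < G x :=
  lt_trans (by positivity) (G_gt hx)

theorem normSq_one (hx : x ∈ interior (B4 (1 / 2))) : F x 0 ^ 2 + F x 1 ^ 2 = G x := by
  have h := Real.sq_sqrt (G_pos hx).le
  simp only [F, PiLp.toLp_apply, Matrix.cons_val]
  linear_combination h + √(G x) ^ 2 * sin_sq_add_cos_sq (π * M x)

theorem normSq_two (x : EuclideanSpace ℝ (Fin 4)) :
    F x 2 ^ 2 + F x 3 ^ 2 = x 2 ^ 2 + x 3 ^ 2 := by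
  simp only [F, PiLp.toLp_apply, Matrix.cons_val]
  linear_combination (x 2 ^ 2 + x 3 ^ 2) * sin_sq_add_cos_sq (T x * M x)

theorem F_outer (hx : x ∈ interior (B4 (1 / 2))) : 1 / 2 < π * (F x 0 ^ 2 + F x 1 ^ 2) := by
  rw [normSq_one hx]
  have h := mul_lt_mul_of_pos_left (G_gt hx) pi_pos
  have h2 : π * (1 / (2 * π)) = 1 / 2 := by field_simp
  linarith

theorem F_mem (hx : x ∈ interior (B4 (1 / 2))) :
    π * (F x 0 ^ 2 + F x 1 ^ 2 + F x 2 ^ 2 + F x 3 ^ 2) < 1 := by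
  have h : F x 0 ^ 2 + F x 1 ^ 2 + F x 2 ^ 2 + F x 3 ^ 2 = G x + (x 2 ^ 2 + x 3 ^ 2) := by
    rw [← normSq_one hx, ← normSq_two x]
    ring
  have h1 : π * (G x + (x 2 ^ 2 + x 3 ^ 2)) = 1 / 2 + X x + π * (x 2 ^ 2 + x 3 ^ 2) := by
    unfold G
    field_simp
  have h2 : π * R2 x = 1 / 2 - π * (x 2 ^ 2 + x 3 ^ 2) := by
    unfold R2
    field_simp
    ring
  rw [h, h1]
  linarith [X_lt hx]

end Estimates

theorem angle_inj {a b : ℝ} (ha : |a| < π) (hb : |b| < π) (hc : cos a = cos b)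
    (hs : sin a = sin b) : a = b := by
  rw [abs_lt] at ha hb
  have h : cos (a - b) = 1 := by
    rw [cos_sub, hc, hs]
    linear_combination sin_sq_add_cos_sq b
  have := (cos_eq_one_iff_of_lt_of_lt (by linarith) (by linarith)).1 h
  linarith

theorem F_injOn : Set.InjOn F (interior (B4 (1 / 2))) := by
  intro x hx y hy hxy
  have hR : R2 x = R2 y := by
    have h := normSq_two x
    rw [hxy, normSq_two y] at h
    unfold R2
    linarith
  have hG : G x = G y := by rw [← normSq_one hx, hxy, normSq_one hy]
  have hX : X x = X y := by
    unfold G at hG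
    have := pi_ne_zero
    field_simp at hG
    linarith
  have ht : x 0 / Q x = y 0 / Q y := by
    rw [X_eq hx, X_eq hy, hR] at hX
    exact φ_strictMono.injective (add_right_cancel (mul_left_cancel₀ (R2_pos hy).ne' hX))
  have hqx := Q_pos hx
  have hqy := Q_pos hy
  have hQ : Q x = Q y := by
    have h1 : R2 x = Q x ^ 2 * (1 + (x 0 / Q x) ^ 2) := by
      rw [R2_eq hx]
      field_simp
      ring
    have h2 : R2 y = Q y ^ 2 * (1 + (y 0 / Q y) ^ 2) := by
      rw [R2_eq hy]
      field_simp
      ring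
    rw [h1, h2, ht] at hR
    have h3 := mul_right_cancel₀ (by positivity) hR
    exact (pow_left_inj₀ hqx.le hqy.le two_ne_zero).1 h3
  have hT : T x = T y := by rw [T, T, ht]
  have h0 : x 0 = y 0 := by
    rw [hQ] at ht
    exact (div_left_inj' hqy.ne').1 ht
  have hg : √(G y) ≠ 0 := (Real.sqrt_pos.2 (G_pos hy)).ne'
  have e0 : F x 0 = F y 0 := by rw [hxy]
  have e1 : F x 1 = F y 1 := by rw [hxy]
  have e2 : F x 2 = F y 2 := by rw [hxy]
  have e3 : F x 3 = F y 3 := by rw [hxy]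
  simp only [F, PiLp.toLp_apply, Matrix.cons_val, hG] at e0 e1 e2 e3
  have hbound : ∀ {z}, z ∈ interior (B4 (1 / 2)) → |π * M z| < π := by
    intro z hz
    rw [abs_mul, abs_of_pos pi_pos]
    exact mul_lt_of_lt_one_right pi_pos (abs_M_lt hz)
  have hM : M x = M y :=
    mul_left_cancel₀ pi_ne_zero
      (angle_inj (hbound hx) (hbound hy) (mul_left_cancel₀ hg e0) (mul_left_cancel₀ hg e1))
  have h1 : x 1 = y 1 := by
    rw [M, M, hQ] at hM
    exact (div_left_inj' hqy.ne').1 hM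
  rw [hT, hM] at e2 e3
  have hsc := sin_sq_add_cos_sq (T y * M y)
  have h2 : x 2 = y 2 := by
    linear_combination cos (T y * M y) * e2 + sin (T y * M y) * e3 - (x 2 - y 2) * hsc
  have h3 : x 3 = y 3 := by
    linear_combination cos (T y * M y) * e3 - sin (T y * M y) * e2 - (x 3 - y 3) * hsc
  ext i
  fin_cases i
  exacts [h0, h1, h2, h3]

/-! ### Smoothness and the derivative -/

theorem F_contDiffAt {x : EuclideanSpace ℝ (Fin 4)} (hx : x ∈ interior (B4 (1 / 2))) :
    ContDiffAt ℝ (⊤ : ℕ∞) F x := by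
  have hc : ∀ i : Fin 4,
      ContDiffAt ℝ (⊤ : ℕ∞) (fun y : EuclideanSpace ℝ (Fin 4) => y i) x := fun i => by fun_prop
  have hW : ContDiffAt ℝ (⊤ : ℕ∞) W x := by unfold W; fun_prop
  have hQ : ContDiffAt ℝ (⊤ : ℕ∞) Q x := hW.sqrt (W_pos hx).ne'
  have hR : ContDiffAt ℝ (⊤ : ℕ∞) R2 x := by unfold R2; fun_prop
  have hT : ContDiffAt ℝ (⊤ : ℕ∞) T x :=
    (((hc 0).div hQ (Q_pos hx).ne').arctan).add contDiffAt_const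
  have hM : ContDiffAt ℝ (⊤ : ℕ∞) M x := (hc 1).div hQ (Q_pos hx).ne'
  have hX : ContDiffAt ℝ (⊤ : ℕ∞) X x := ((hc 0).mul hQ).add (hR.mul hT)
  have hG : ContDiffAt ℝ (⊤ : ℕ∞) G x := contDiffAt_const.add (hX.div_const π)
  have hr : ContDiffAt ℝ (⊤ : ℕ∞) (fun y => √(G y)) x := hG.sqrt (G_pos hx).ne'
  have hθ : ContDiffAt ℝ (⊤ : ℕ∞) (fun y => π * M y) x := contDiffAt_const.mul hM
  have hψ : ContDiffAt ℝ (⊤ : ℕ∞) (fun y => T y * M y) x := hT.mul hM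
  rw [contDiffAt_euclidean]
  intro i
  fin_cases i
  · exact hr.mul hθ.cos
  · exact hr.mul hθ.sin
  · exact ((hc 2).mul hψ.cos).sub ((hc 3).mul hψ.sin)
  · exact ((hc 2).mul hψ.sin).add ((hc 3).mul hψ.cos)

/-- The coordinates of a Fréchet derivative are the derivatives of the coordinates along lines. -/
theorem fderiv_coord {x v : EuclideanSpace ℝ (Fin 4)}
    {f : EuclideanSpace ℝ (Fin 4) → EuclideanSpace ℝ (Fin 4)} (hf : DifferentiableAt ℝ f x)
    (i : Fin 4) {d : ℝ} (hd : HasDerivAt (fun s : ℝ => f (x + s • v) i) d 0) :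
    fderiv ℝ f x v i = d := by
  have hl : HasDerivAt (fun s : ℝ => x + s • v) v 0 := by
    simpa using ((hasDerivAt_id (0 : ℝ)).smul_const v).const_add x
  have hf' : HasFDerivAt f (fderiv ℝ f x) (x + (0 : ℝ) • v) := by
    simpa using hf.hasFDerivAt
  have h := hf'.comp_hasDerivAt (0 : ℝ) hl
  have h2 := (EuclideanSpace.proj (𝕜 := ℝ) i).hasFDerivAt.comp_hasDerivAt (0 : ℝ) h
  exact h2.unique hd

section Differentials

variable (x v : EuclideanSpace ℝ (Fin 4))

/-- The differential of `R2`. -/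
noncomputable def dR2 : ℝ := -2 * (x 2 * v 2 + x 3 * v 3)

/-- The differential of `Q`. -/
noncomputable def dQ : ℝ := -(x 0 * v 0 + x 2 * v 2 + x 3 * v 3) / Q x

/-- The differential of `T`. -/
noncomputable def dT : ℝ := (Q x * v 0 - x 0 * dQ x v) / R2 x

/-- The differential of `M`. -/
noncomputable def dM : ℝ := (v 1 * Q x - x 1 * dQ x v) / Q x ^ 2

/-- The differential of `G`. -/
noncomputable def dG : ℝ := (2 * Q x * v 0 + T x * dR2 x v) / π

variable {x}

theorem hasDerivAt_coord (i : Fin 4) : HasDerivAt (fun s : ℝ => (x + s • v) i) (v i) 0 := by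
  simpa using ((hasDerivAt_id (0 : ℝ)).mul_const (v i)).const_add (x i)

theorem hasDerivAt_R2 : HasDerivAt (fun s : ℝ => R2 (x + s • v)) (dR2 x v) 0 := by
  have h := (((hasDerivAt_coord (x := x) v 2).pow 2).const_sub (1 / (2 * π))).sub
    ((hasDerivAt_coord (x := x) v 3).pow 2)
  refine h.congr_deriv ?_
  simp [dR2]
  ring

theorem hasDerivAt_Q (hx : x ∈ interior (B4 (1 / 2))) :
    HasDerivAt (fun s : ℝ => Q (x + s • v)) (dQ x v) 0 := by
  have h := ((((hasDerivAt_coord (x := x) v 0).pow 2).const_sub (1 / (2 * π))).sub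
    ((hasDerivAt_coord (x := x) v 2).pow 2)).sub ((hasDerivAt_coord (x := x) v 3).pow 2)
  have hW : HasDerivAt (fun s : ℝ => W (x + s • v))
      (-2 * (x 0 * v 0 + x 2 * v 2 + x 3 * v 3)) 0 := by
    refine h.congr_deriv ?_
    simp
    ring
  have h2 := hW.sqrt (by simpa using (W_pos hx).ne')
  refine h2.congr_deriv ?_
  have := Q_pos hx
  simp only [zero_smul, add_zero]
  rw [dQ, ← Q]
  field_simp

theorem hasDerivAt_T (hx : x ∈ interior (B4 (1 / 2))) :
    HasDerivAt (fun s : ℝ => T (x + s • v)) (dT x v) 0 := by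
  have hq := Q_pos hx
  have hR := R2_pos hx
  have h := (((hasDerivAt_coord (x := x) v 0).div (hasDerivAt_Q v hx)
    (by simpa using hq.ne')).arctan).add_const (π / 2)
  refine h.congr_deriv ?_
  have h1 : 1 + (x 0 / Q x) ^ 2 = R2 x / Q x ^ 2 := by
    rw [R2_eq hx]
    field_simp
    ring
  simp only [zero_smul, add_zero, Pi.div_apply]
  rw [h1, dT]
  field_simp

theorem hasDerivAt_M (hx : x ∈ interior (B4 (1 / 2))) :
    HasDerivAt (fun s : ℝ => M (x + s • v)) (dM x v) 0 := by
  have h := (hasDerivAt_coord (x := x) v 1).div (hasDerivAt_Q v hx)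
    (by simpa using (Q_pos hx).ne')
  refine h.congr_deriv ?_
  simp [dM]

theorem hasDerivAt_G (hx : x ∈ interior (B4 (1 / 2))) :
    HasDerivAt (fun s : ℝ => G (x + s • v)) (dG x v) 0 := by
  have h := ((((hasDerivAt_coord (x := x) v 0).mul (hasDerivAt_Q v hx)).add
    ((hasDerivAt_R2 (x := x) v).mul (hasDerivAt_T v hx))).div_const π).const_add (1 / (2 * π))
  refine h.congr_deriv ?_
  have hR := (R2_pos hx).ne'
  have := pi_ne_zero
  simp only [zero_smul, add_zero]
  rw [dG, dT]
  field_simp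
  ring

end Differentials

/-- Away from the origin in the first factor, `dr ∧ r dθ = ½ d(r²) ∧ dθ`, and a rotation of the
second factor by a variable angle `ψ` adds `½ d|z₂|² ∧ dψ` to its area form. -/
theorem omega4_fderiv_F {x : EuclideanSpace ℝ (Fin 4)} (hx : x ∈ interior (B4 (1 / 2)))
    (v w : EuclideanSpace ℝ (Fin 4)) :
    omega4 (fderiv ℝ F x v) (fderiv ℝ F x w) =
      π / 2 * (dG x v * dM x w - dG x w * dM x v) + (v 2 * w 3 - v 3 * w 2)
      - 1 / 2 * (dR2 x v * (dT x w * M x + T x * dM x w)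
        - dR2 x w * (dT x v * M x + T x * dM x v)) := by
  have hd : DifferentiableAt ℝ F x := (F_contDiffAt hx).differentiableAt (by simp)
  have hr (u : EuclideanSpace ℝ (Fin 4)) := (hasDerivAt_G u hx).sqrt
    (by simpa using (G_pos hx).ne')
  have hθ (u : EuclideanSpace ℝ (Fin 4)) := (hasDerivAt_M u hx).const_mul π
  have hψ (u : EuclideanSpace ℝ (Fin 4)) := (hasDerivAt_T u hx).mul (hasDerivAt_M u hx)
  have c2 (u : EuclideanSpace ℝ (Fin 4)) := hasDerivAt_coord (x := x) u 2
  have c3 (u : EuclideanSpace ℝ (Fin 4)) := hasDerivAt_coord (x := x) u 3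
  have d0 (u : EuclideanSpace ℝ (Fin 4)) := fderiv_coord hd 0 ((hr u).mul (hθ u).cos)
  have d1 (u : EuclideanSpace ℝ (Fin 4)) := fderiv_coord hd 1 ((hr u).mul (hθ u).sin)
  have d2 (u : EuclideanSpace ℝ (Fin 4)) :=
    fderiv_coord hd 2 (((c2 u).mul (hψ u).cos).sub ((c3 u).mul (hψ u).sin))
  have d3 (u : EuclideanSpace ℝ (Fin 4)) :=
    fderiv_coord hd 3 (((c2 u).mul (hψ u).sin).add ((c3 u).mul (hψ u).cos))
  simp only [zero_smul, add_zero, Pi.mul_apply] at d0 d1 d2 d3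
  rw [omega4, d0, d0, d1, d1, d2, d2, d3, d3]
  have hg : 0 < √(G x) := Real.sqrt_pos.2 (G_pos hx)
  have h1 := sin_sq_add_cos_sq (π * M x)
  have h2 := sin_sq_add_cos_sq (T x * M x)
  generalize ha : dG x v / (2 * √(G x)) = a
  generalize hb : dG x w / (2 * √(G x)) = b
  have ea : dG x v = 2 * √(G x) * a := by rw [← ha]; field_simp
  have eb : dG x w = 2 * √(G x) * b := by rw [← hb]; field_simp
  rw [ea, eb]
  unfold dR2
  linear_combination (√(G x) * π * (a * dM x w - b * dM x v)) * h1
    + (v 2 * w 3 - v 3 * w 2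
      + (x 2 * v 2 + x 3 * v 3) * (dT x w * M x + T x * dM x w)
      - (x 2 * w 2 + x 3 * w 3) * (dT x v * M x + T x * dM x v)) * h2

theorem F_symplectic {x : EuclideanSpace ℝ (Fin 4)} (hx : x ∈ interior (B4 (1 / 2)))
    (v w : EuclideanSpace ℝ (Fin 4)) :
    omega4 (fderiv ℝ F x v) (fderiv ℝ F x w) = omega4 v w := by
  rw [omega4_fderiv_F hx]
  have hq := (Q_pos hx).ne'
  have hR := (R2_pos hx).ne'
  have hpi := pi_ne_zero
  have hRe := R2_eq hx
  -- The terms containing `T` cancel, since `T` is both the coefficient of `dR2` in `π dG` and the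
  -- coefficient of `dM` in the differential of the rotation angle.
  have h1 : π / 2 * (dG x v * dM x w - dG x w * dM x v) + (v 2 * w 3 - v 3 * w 2)
      - 1 / 2 * (dR2 x v * (dT x w * M x + T x * dM x w)
        - dR2 x w * (dT x v * M x + T x * dM x v))
      = Q x * (v 0 * dM x w - w 0 * dM x v) + (v 2 * w 3 - v 3 * w 2)
        - M x / 2 * (dR2 x v * dT x w - dR2 x w * dT x v) := by
    unfold dG
    field_simp
    ring
  -- `½ dR2 ∧ dT = dQ ∧ dx₁`, from `R2 = x₁² + Q²`.
  have h2 : dR2 x v * dT x w - dR2 x w * dT x v = 2 * (dQ x v * w 0 - dQ x w * v 0) := by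
    have e : ∀ u, dR2 x u = 2 * (x 0 * u 0 + Q x * dQ x u) := by
      intro u
      unfold dR2 dQ
      field_simp
      ring
    rw [e, e, dT, dT]
    generalize dQ x v = a
    generalize dQ x w = b
    field_simp
    rw [hRe]
    ring
  rw [h1, h2, dM, dM, M, omega4]
  field_simp
  ring

end Shell

/-! ### The three balls -/

/-- The exchange of the two complex coordinates. -/
noncomputable def swapE : EuclideanSpace ℝ (Fin 4) ≃L[ℝ] EuclideanSpace ℝ (Fin 4) :=
  (LinearIsometryEquiv.piLpCongrLeft 2 ℝ ℝ
    (Equiv.addRight (2 : Fin 4))).toContinuousLinearEquiv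

theorem swapE_apply (x : EuclideanSpace ℝ (Fin 4)) :
    swapE x 0 = x 2 ∧ swapE x 1 = x 3 ∧ swapE x 2 = x 0 ∧ swapE x 3 = x 1 :=
  ⟨rfl, rfl, rfl, rfl⟩

theorem omega4_swapE (v w : EuclideanSpace ℝ (Fin 4)) :
    omega4 (swapE v) (swapE w) = omega4 v w := by
  obtain ⟨v0, v1, v2, v3⟩ := swapE_apply v
  obtain ⟨w0, w1, w2, w3⟩ := swapE_apply w
  rw [omega4, omega4, v0, v1, v2, v3, w0, w1, w2, w3]
  ring

/-- There exist three smooth injective maps from the interior of `B⁴(1/2)` into the interior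
of `B⁴(1)`, with pairwise disjoint images, each of whose derivative preserves the standard
symplectic form `ω₀` at every point; i.e. three copies of `int B⁴(1/2)` symplectically embed
disjointly into `int B⁴(1)`. -/
theorem three_balls_embed :
    ∃ f : Fin 3 → EuclideanSpace ℝ (Fin 4) → EuclideanSpace ℝ (Fin 4),
      (∀ i, ContDiffOn ℝ (⊤ : ℕ∞) (f i) (interior (B4 (1 / 2)))) ∧
      (∀ i, Set.InjOn (f i) (interior (B4 (1 / 2)))) ∧
      (∀ i, Set.MapsTo (f i) (interior (B4 (1 / 2))) (interior (B4 1))) ∧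
      (∀ i j, i ≠ j →
        Disjoint (f i '' interior (B4 (1 / 2))) (f j '' interior (B4 (1 / 2)))) ∧
      (∀ i, ∀ x ∈ interior (B4 (1 / 2)), ∀ v w,
        omega4 (fderiv ℝ (f i) x v) (fderiv ℝ (f i) x w) = omega4 v w) := by
  have memI {a : ℝ} (ha : 0 < a) (x) := mem_interior_B4 ha x
  have half : (0 : ℝ) < 1 / 2 := by norm_num
  have d01 : ∀ x ∈ interior (B4 (1 / 2)), ∀ y ∈ interior (B4 (1 / 2)), x ≠ Shell.F y := by
    rintro _ hx y hy rfl
    rw [memI half] at hx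
    have := Shell.F_outer hy
    nlinarith [pi_pos, sq_nonneg (Shell.F y 2), sq_nonneg (Shell.F y 3)]
  have d02 : ∀ x ∈ interior (B4 (1 / 2)), ∀ y ∈ interior (B4 (1 / 2)),
      x ≠ swapE (Shell.F y) := by
    rintro _ hx y hy rfl
    obtain ⟨e0, e1, e2, e3⟩ := swapE_apply (Shell.F y)
    rw [memI half, e0, e1, e2, e3] at hx
    have := Shell.F_outer hy
    nlinarith [pi_pos, sq_nonneg (Shell.F y 2), sq_nonneg (Shell.F y 3)]
  -- At a common point of the second and third images `π|z₁|²` and `π|z₂|²` both exceed `1/2`.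
  have d12 : ∀ x ∈ interior (B4 (1 / 2)), ∀ y ∈ interior (B4 (1 / 2)),
      Shell.F x ≠ swapE (Shell.F y) := by
    intro x hx y hy h
    obtain ⟨-, -, e2, e3⟩ := swapE_apply (Shell.F y)
    have h1 := Shell.F_outer hx
    have h2 := Shell.F_outer hy
    have h3 := Shell.F_mem hx
    rw [← e2, ← e3, ← h] at h2
    linarith
  refine ⟨![id, Shell.F, swapE ∘ Shell.F], ?_, ?_, ?_, ?_, ?_⟩
  · intro i
    fin_cases i
    · exact contDiff_id.contDiffOn
    · exact fun x hx => (Shell.F_contDiffAt hx).contDiffWithinAt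
    · exact fun x hx =>
        (swapE.contDiff.contDiffAt.comp x (Shell.F_contDiffAt hx)).contDiffWithinAt
  · intro i
    fin_cases i
    · exact Set.injOn_id _
    · exact Shell.F_injOn
    · exact swapE.injective.injOn.comp Shell.F_injOn (Set.mapsTo_univ _ _)
  · intro i x hx
    fin_cases i
    · rw [memI one_pos]
      have h := (memI half x).1 hx
      change π * (x 0 ^ 2 + x 1 ^ 2 + x 2 ^ 2 + x 3 ^ 2) < 1
      linarith
    · exact (memI one_pos _).2 (Shell.F_mem hx)
    · obtain ⟨e0, e1, e2, e3⟩ := swapE_apply (Shell.F x)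
      refine (memI one_pos (swapE (Shell.F x))).2 ?_
      rw [e0, e1, e2, e3]
      linarith [Shell.F_mem hx]
  · intro i j hij
    rw [Set.disjoint_left]
    rintro _ ⟨x, hx, rfl⟩ ⟨y, hy, hyx⟩
    revert hyx
    apply Ne.symm
    fin_cases i <;> fin_cases j
    · exact absurd rfl hij
    · exact d01 x hx y hy
    · exact d02 x hx y hy
    · exact (d01 y hy x hx).symm
    · exact absurd rfl hij
    · exact d12 x hx y hy
    · exact (d02 y hy x hx).symm
    · exact (d12 y hy x hx).symm
    · exact absurd rfl hij
  · intro i x hx v w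
    fin_cases i
    · change omega4 (fderiv ℝ id x v) (fderiv ℝ id x w) = _
      rw [fderiv_id]
      rfl
    · exact Shell.F_symplectic hx v w
    · change omega4 (fderiv ℝ (swapE ∘ Shell.F) x v) (fderiv ℝ (swapE ∘ Shell.F) x w) = _
      rw [swapE.comp_fderiv]
      exact (omega4_swapE _ _).trans (Shell.F_symplectic hx v w)
end
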